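/- arXiv:2401.14335 — 7 statements merged into one kernel-verified Lean document; each statement's English description precedes it below -/
import Mathlib

section
/- Let 1 ≤ q₁ < q₂ < ⋯ be a strictly increasing sequence of positive integers with partial sums Sₙ = q₁ + ⋯ + qₙ, and for each n let fₙ(x) = (1+x^{q₁})⋯(1+x^{qₙ}) = Σ_{m=0}^{Sₙ} γ_m(n) x^m. If there exist positive integers k₀ and n₀ such that 2k₀ + q_{n+1} ≤ Sₙ for all n ≥ n₀, and γ_m(n₀) ≥ 1 for all m with k₀ ≤ m ≤ S_{n₀} − k₀, then every integer m ≥ k₀ can be written as a sum of one or more distinct members of the sequence {q₁, q₂, …}. -/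
open Polynomial Finset

/-!
The coefficient of `X ^ m` in `∏ i ∈ s, (1 + X ^ q i)` counts the subsets of `s` with `q`-sum `m`.
If the subset sums over `s` fill the interval `[k, S - k]`, then adjoining an index `i` adds its
translate `[k + q i, S + q i - k]`. The two intervals leave no integer uncovered as soon as
`2 * k + q i ≤ S + 1`, so the new subset sums fill `[k, (S + q i) - k]` with the same margin `k`.
As the indices are adjoined one by one the right end goes to infinity.
-/

/-- The sums of `q` over subsets of `s`, including the empty sum `0`. This is the indexed version of
`Finset.subsetSum`: indices are used at most once, but equal values at different indices may be
used together. -/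
def indexedSubsetSum {ι M : Type*} [DecidableEq M] [AddCommMonoid M] (q : ι → M) (s : Finset ι) :
    Finset M :=
  s.powerset.image fun t ↦ ∑ i ∈ t, q i

section AddCommMonoid

variable {ι M : Type*} [DecidableEq M] [AddCommMonoid M] {q : ι → M} {s t : Finset ι} {m : M}

theorem mem_indexedSubsetSum : m ∈ indexedSubsetSum q s ↔ ∃ t ⊆ s, ∑ i ∈ t, q i = m := by
  simp only [indexedSubsetSum, mem_image, mem_powerset]

theorem indexedSubsetSum_mono (hst : s ⊆ t) : indexedSubsetSum q s ⊆ indexedSubsetSum q t :=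
  image_subset_image (powerset_mono.2 hst)

theorem add_mem_indexedSubsetSum_insert [DecidableEq ι] {i : ι} (hi : i ∉ s)
    (hm : m ∈ indexedSubsetSum q s) :
    q i + m ∈ indexedSubsetSum q (insert i s) := by
  obtain ⟨t, hts, rfl⟩ := mem_indexedSubsetSum.1 hm
  exact mem_indexedSubsetSum.2
    ⟨insert i t, insert_subset_insert i hts, sum_insert (notMem_mono hts hi)⟩

end AddCommMonoid

theorem coeff_prod_one_add_X_pow {R ι : Type*} [CommSemiring R] (q : ι → ℕ) (s : Finset ι)
    (m : ℕ) :
    (∏ i ∈ s, (1 + (X : R[X]) ^ q i)).coeff m = #{t ∈ s.powerset | ∑ i ∈ t, q i = m} := by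
  classical
  simp only [prod_one_add, prod_pow_eq_pow_sum, finsetSum_coeff, coeff_X_pow, sum_boole, eq_comm]

section FillsUpToMargin

variable {ι : Type*} {q : ι → ℕ} {s : Finset ι} {k : ℕ}

theorem one_le_coeff_prod_one_add_X_pow_iff {m : ℕ} :
    1 ≤ (∏ i ∈ s, (1 + (X : ℕ[X]) ^ q i)).coeff m ↔ m ∈ indexedSubsetSum q s := by
  simp only [coeff_prod_one_add_X_pow, Nat.cast_id, one_le_card, filter_nonempty_iff, mem_powerset,
    mem_indexedSubsetSum]

/-- The subset sums of `q` over `s` fill the interval `[k, S - k]`, where `S = ∑ i ∈ s, q i`. The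
upper bound is written `m + k ≤ S` to avoid truncated subtraction. -/
def FillsUpToMargin (q : ι → ℕ) (s : Finset ι) (k : ℕ) : Prop :=
  ∀ m, k ≤ m → m + k ≤ ∑ i ∈ s, q i → m ∈ indexedSubsetSum q s

theorem FillsUpToMargin.insert [DecidableEq ι] {i : ι} (h : FillsUpToMargin q s k) (hi : i ∉ s)
    (hgap : 2 * k + q i ≤ (∑ j ∈ s, q j) + 1) : FillsUpToMargin q (insert i s) k := by
  intro m hkm hmS
  rw [sum_insert hi] at hmS
  rcases le_or_gt (m + k) (∑ j ∈ s, q j) with hlow | hhigh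
  · exact indexedSubsetSum_mono (subset_insert i s) (h m hkm hlow)
  · have hmem : m - q i ∈ indexedSubsetSum q s := h (m - q i) (by lia) (by lia)
    have hadd : q i + (m - q i) = m := by lia
    exact hadd ▸ add_mem_indexedSubsetSum_insert hi hmem

end FillsUpToMargin

theorem FillsUpToMargin.range_of_le {q : ℕ → ℕ} {k n₀ n : ℕ}
    (h : FillsUpToMargin q (range n₀) k)
    (hgap : ∀ n, n₀ ≤ n → 2 * k + q n ≤ (∑ i ∈ range n, q i) + 1) (hn : n₀ ≤ n) :
    FillsUpToMargin q (range n) k := by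
  induction n, hn using Nat.le_induction with
  | base => exact h
  | succ n hn ih =>
    rw [range_add_one]
    exact ih.insert notMem_range_self (hgap n hn)

theorem tendsto_sum_range_atTop {q : ℕ → ℕ} (hq : Filter.Tendsto q Filter.atTop Filter.atTop) :
    Filter.Tendsto (fun n ↦ ∑ i ∈ range n, q i) Filter.atTop Filter.atTop :=
  (Filter.tendsto_add_atTop_iff_nat 1).1 <|
    Filter.tendsto_atTop_mono
      (fun n ↦ single_le_sum_of_canonicallyOrdered (self_mem_range_succ n)) hq

theorem stmt0_general (q : ℕ → ℕ)
    (hq : Filter.Tendsto (fun n ↦ ∑ i ∈ range n, q i) Filter.atTop Filter.atTop)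
    (k₀ n₀ : ℕ) (hk₀ : 0 < k₀)
    (hS : ∀ n, n₀ ≤ n → 2 * k₀ + q n ≤ (∑ i ∈ range n, q i) + 1)
    (hγ : ∀ m, k₀ ≤ m → m + k₀ ≤ ∑ i ∈ range n₀, q i →
      1 ≤ (∏ i ∈ range n₀, (1 + (X : ℕ[X]) ^ q i)).coeff m) :
    ∀ m, k₀ ≤ m → ∃ T : Finset ℕ, T.Nonempty ∧ m = ∑ i ∈ T, q i := by
  intro m hm
  have hbase : FillsUpToMargin q (range n₀) k₀ := fun m hkm hmS ↦
    one_le_coeff_prod_one_add_X_pow_iff.1 (hγ m hkm hmS)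
  obtain ⟨n, hmn, hn⟩ :=
    ((hq.eventually_ge_atTop (m + k₀)).and (Filter.eventually_ge_atTop n₀)).exists
  obtain ⟨T, -, hT⟩ := mem_indexedSubsetSum.1 (hbase.range_of_le hS hn m hm hmn)
  have hT_ne : ∑ i ∈ T, q i ≠ 0 := by lia
  exact ⟨T, nonempty_of_sum_ne_zero hT_ne, hT.symm⟩

/-- **Theorem 2 (generating polynomials).**
Let `1 ≤ q 0 < q 1 < ⋯` be a strictly increasing sequence of positive integers with
partial sums `S n = ∑ i < n, q i`, and let
`f n = ∏ i < n, (1 + X ^ q i) = ∑ m, γ m n • X ^ m`.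
If there are positive integers `k₀`, `n₀` with `2k₀ + q (n+1) ≤ S n` for all `n ≥ n₀`
(in `0`-indexed form: `2k₀ + q n ≤ S n`), and `γ m n₀ ≥ 1` for all `k₀ ≤ m ≤ S n₀ - k₀`,
then every integer `m ≥ k₀` is a sum of one or more distinct members of the sequence. -/
theorem stmt0 (q : ℕ → ℕ) (hpos : 1 ≤ q 0) (hmono : StrictMono q)
    (k₀ n₀ : ℕ) (hk₀ : 0 < k₀) (hn₀ : 0 < n₀)
    (hS : ∀ n, n₀ ≤ n → 2 * k₀ + q n ≤ ∑ i ∈ Finset.range n, q i)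
    (hγ : ∀ m, k₀ ≤ m → m + k₀ ≤ ∑ i ∈ Finset.range n₀, q i →
      1 ≤ (∏ i ∈ Finset.range n₀, (1 + (X : Polynomial ℕ) ^ q i)).coeff m) :
    ∀ m, k₀ ≤ m → ∃ T : Finset ℕ, T.Nonempty ∧ m = ∑ i ∈ T, q i :=
  stmt0_general q (tendsto_sum_range_atTop hmono.tendsto_atTop) k₀ n₀ hk₀
    (fun n hn ↦ (hS n hn).trans (Nat.le_succ _)) hγ
end

section
/- Let 1 ≤ q₁ < q₂ < ⋯ be a strictly increasing sequence of positive integers satisfying q_{n+1} < 2qₙ for all n, and let k₀ ≥ 0 be a given integer. Then Sₙ − q_{n+1} ≥ 2k₀ for every n ≥ q₁ + 2k₀ + 1, where Sₙ = q₁ + ⋯ + qₙ. -/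
/-!
With `S n = ∑ i < n, q i`, telescoping gives `∑ i < n, (2 q i - q (i + 1)) = S n + q 0 - q n`, so a
lower bound on each `2 q i - q (i + 1)` makes `S n - q n` grow at least linearly in `n`; for integer
sequences the strict inequality `q (i + 1) < 2 q i` supplies the lower bound `1`.
-/

theorem nsmul_add_le_sum_range_add {M : Type*} [AddCommMonoid M] [Preorder M] [IsOrderedAddMonoid M]
    {q : ℕ → M} {d : M} (hq : ∀ n, q (n + 1) + d ≤ 2 • q n) (n : ℕ) :
    n • d + q n ≤ ∑ i ∈ Finset.range n, q i + q 0 := by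
  induction n with
  | zero => simp
  | succ n ih =>
    calc (n + 1) • d + q (n + 1)
        = n • d + (q (n + 1) + d) := by rw [succ_nsmul]; abel
      _ ≤ n • d + 2 • q n := by gcongr; exact hq n
      _ = n • d + q n + q n := by rw [two_nsmul, add_assoc]
      _ ≤ ∑ i ∈ Finset.range n, q i + q 0 + q n := by gcongr
      _ = ∑ i ∈ Finset.range (n + 1), q i + q 0 := by
        rw [Finset.sum_range_succ, add_right_comm]

theorem stmt1_general {q : ℕ → ℤ} (hgrowth : ∀ n, q (n + 1) < 2 * q n) {k : ℤ} {n : ℕ}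
    (hn : q 0 + k ≤ n) : k ≤ ∑ i ∈ Finset.range n, q i - q n := by
  have linear_growth : n • (1 : ℤ) + q n ≤ ∑ i ∈ Finset.range n, q i + q 0 :=
    nsmul_add_le_sum_range_add (fun m ↦ by simpa using Int.add_one_le_of_lt (hgrowth m)) n
  rw [nsmul_one] at linear_growth
  linarith

/-- **Lemma 3.**
Let `1 ≤ q 0 < q 1 < ⋯` be a strictly increasing sequence of positive integers with
`q (n+1) < 2 * q n` for all `n`, and let `k₀ ≥ 0` be a given integer.  Then
`S n - q (n+1) ≥ 2 * k₀` for every `n ≥ q 0 + 2 * k₀ + 1`, where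
`S n = ∑ i < n, q i` (so in `0`-indexed form the term following `S n` is `q n`). -/
theorem stmt1 (q : ℕ → ℕ) (hpos : 1 ≤ q 0) (hmono : StrictMono q)
    (hgrowth : ∀ n, q (n + 1) < 2 * q n) (k₀ : ℕ) :
    ∀ n, q 0 + 2 * k₀ + 1 ≤ n →
      (2 * k₀ : ℤ) ≤ (∑ i ∈ Finset.range n, q i : ℕ) - (q n : ℤ) := by
  intro n hn
  exact_mod_cast stmt1_general (q := fun i ↦ (q i : ℤ)) (k := 2 * k₀)
    (fun m ↦ by exact_mod_cast hgrowth m) (n := n) (by lia)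
end

section
/- For every real (equivalently, integer) x ≥ 7, the half-open interval (x, 2x] contains a prime number congruent to 1 modulo 4. -/
/-!
Give `d ≤ N` the weight `Λ(d) (P(N / d) + χ₄(d) Q(N / d))`, where `P` and `Q` are integer
combinations of dilates of `n ↦ n` and of `n ↦ ∑_{k ≤ n} χ₄(k)` respectively. Since `Λ * 1 = log`,
the total weight is a combination of log-factorials and of sums `∑ χ₄(n) log n = O(log N)`; it
equals `(A / 2) N + O(log N)`, where `A ≈ 0.9213` is Chebyshev's constant.

Now `P(1) = Q(1) = 1`, so a prime in `(N / 2, N]` counts twice if it is `1` modulo `4` and not at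
all if it is `3` modulo `4`. For `n ≥ 2` one has `P(n) + |Q(n)| ≤ [5 ≤ n] + [11 ≤ n]`, so the
`d ≤ N / 2` contribute at most `ψ(N / 5) + ψ(N / 11)`. By the bound
`ψ(x) ≤ x log 4 + O(√x log x)` this is less than about `0.404 N`. As `A / 2 > 0.46`, primes `1`
modulo `4` must occur in `(N / 2, N]` once `N ≥ 2 ^ 24`; smaller `N` are covered by a chain of
primes, each at most twice its predecessor.
-/

open Finset Real ZMod
open ArithmeticFunction hiding log
open scoped Nat Chebyshev ArithmeticFunction.zeta

lemma sum_Ioc_mul_convolution_eq_sum_sum {R : Type*} [CommSemiring R] {f : ℕ → R}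
    (hf : ∀ a b, f (a * b) = f a * f b) (g h : ArithmeticFunction R) (N : ℕ) :
    ∑ n ∈ Ioc 0 N, f n * (g * h) n =
      ∑ d ∈ Ioc 0 N, f d * g d * ∑ e ∈ Ioc 0 (N / d), f e * h e := by
  let fg : ArithmeticFunction R := ⟨fun n ↦ f n * g n, by simp⟩
  let fh : ArithmeticFunction R := ⟨fun n ↦ f n * h n, by simp⟩
  have convolution_eq (n : ℕ) : (fg * fh) n = f n * (g * h) n := by
    rw [mul_apply, mul_apply, mul_sum]
    refine sum_congr rfl fun ⟨a, b⟩ hab ↦ ?_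
    have hn : a * b = n := (Nat.mem_divisorsAntidiagonal.1 hab).1
    change f a * g a * (f b * h b) = _
    rw [← hn, hf]
    ring
  simp_rw [← convolution_eq]
  exact sum_Ioc_mul_eq_sum_sum fg fh N

lemma sum_Ioc_mul_log_eq {f : ℕ → ℝ} (hf : ∀ a b, f (a * b) = f a * f b) (N : ℕ) :
    ∑ n ∈ Ioc 0 N, f n * log n =
      ∑ d ∈ Ioc 0 N, f d * Λ d * ∑ e ∈ Ioc 0 (N / d), f e := by
  have key := sum_Ioc_mul_convolution_eq_sum_sum hf Λ (ζ : ArithmeticFunction ℝ) N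
  rw [vonMangoldt_mul_zeta] at key
  refine key.trans (sum_congr rfl fun d _ ↦ congrArg _ (sum_congr rfl fun e he ↦ ?_))
  rw [natCoe_apply, zeta_apply_ne (mem_Ioc.1 he).1.ne', Nat.cast_one, mul_one]

lemma sum_Ioc_div_mul_eq {R : Type*} [NonUnitalNonAssocSemiring R] (u : ℕ → R) {G : ℕ → R}
    (hG : G 0 = 0) (N k : ℕ) :
    ∑ d ∈ Ioc 0 (N / k), u d * G (N / k / d) = ∑ d ∈ Ioc 0 N, u d * G (N / d / k) := by
  simp_rw [Nat.div_right_comm N k]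
  refine sum_subset (Ioc_subset_Ioc_right (Nat.div_le_self _ _)) fun d hd hd' ↦ ?_
  have hlt : N / k < d := by
    simp only [mem_Ioc] at hd hd'
    omega
  rw [Nat.div_right_comm, Nat.div_eq_of_lt hlt, hG, mul_zero]

lemma log_factorial_eq_sum (n : ℕ) : log n ! = ∑ k ∈ Ioc 0 n, log k := by
  induction n with
  | zero => simp
  | succ n ih =>
    rw [sum_Ioc_succ_top n.zero_le, ← ih, Nat.factorial_succ, Nat.cast_mul,
      log_mul (by positivity) (by positivity), add_comm]

lemma log_factorial_div_eq_sum (N k : ℕ) :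
    log (N / k)! = ∑ d ∈ Ioc 0 N, Λ d * (N / d / k : ℕ) := by
  have key := sum_Ioc_mul_log_eq (f := fun _ ↦ 1) (by simp) (N / k)
  simp only [one_mul, sum_const, Nat.card_Ioc, tsub_zero, nsmul_eq_mul, mul_one] at key
  rw [log_factorial_eq_sum, key]
  exact sum_Ioc_div_mul_eq Λ (G := fun n ↦ (n : ℝ)) Nat.cast_zero N k

lemma psi_div_eq_sum (N : ℕ) {k : ℕ} (hk : 0 < k) :
    ψ (N / k) = ∑ d ∈ Ioc 0 N, Λ d * if k ≤ N / d then 1 else 0 := by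
  have key := sum_Ioc_div_mul_eq Λ (G := fun n ↦ if 1 ≤ n then 1 else 0) (by simp) N k
  simp only [Nat.one_le_div_iff hk] at key
  rw [Chebyshev.psi, Nat.floor_div_eq_div, ← key]
  refine sum_congr rfl fun d hd ↦ ?_
  rw [mem_Ioc] at hd
  rw [if_pos ((Nat.one_le_div_iff hd.1).2 hd.2), mul_one]

lemma mul_log_sub_log_le {x y : ℝ} (hx : 0 < x) (hy : 0 < y) :
    y * (log x - log y) ≤ x - y := by
  rw [← log_div hx.ne' hy.ne']
  calc y * log (x / y) ≤ y * (x / y - 1) := by gcongr; exact log_le_sub_one_of_pos (by positivity)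
    _ = x - y := by field_simp

lemma mul_log_sub_self_le_log_factorial (n : ℕ) : n * log n - n ≤ log n ! := by
  rcases n.eq_zero_or_pos with rfl | hn
  · simp
  have hpow : (n : ℝ) ^ n ≤ exp n * n ! :=
    (div_le_iff₀ (by positivity)).1 (pow_div_factorial_le_exp n n.cast_nonneg n)
  have hlog := log_le_log (by positivity) hpow
  rw [log_pow, log_mul (by positivity) (by positivity), log_exp] at hlog
  linarith

lemma log_factorial_le {n : ℕ} (hn : 1 ≤ n) : log n ! ≤ n * log n - n + log n + 1 := by
  induction n, hn using Nat.le_induction with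
  | base => simp
  | succ n hn ih =>
    have hn0 : (0 : ℝ) < n := by exact_mod_cast hn
    have tangent := mul_log_sub_log_le hn0 (by positivity : (0 : ℝ) < n + 1)
    rw [Nat.factorial_succ, Nat.cast_mul, log_mul (by positivity) (by positivity)]
    push_cast
    linarith

lemma abs_log_factorial_floor_sub_le {x : ℝ} (hx : 1 ≤ x) :
    |log ⌊x⌋₊ ! - (x * log x - x)| ≤ log x + 1 := by
  have hn : 1 ≤ ⌊x⌋₊ := (Nat.one_le_floor_iff x).2 hx
  have lower := mul_log_sub_self_le_log_factorial ⌊x⌋₊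
  have upper := log_factorial_le hn
  have hnx : (⌊x⌋₊ : ℝ) ≤ x := Nat.floor_le (by linarith)
  have hxn : x < ⌊x⌋₊ + 1 := Nat.lt_floor_add_one x
  have hn1 : (1 : ℝ) ≤ ⌊x⌋₊ := by exact_mod_cast hn
  generalize (⌊x⌋₊ : ℝ) = n at *
  have hlogn : 0 ≤ log n := log_nonneg hn1
  have hlog : log n ≤ log x := log_le_log (by linarith) hnx
  have increment_nonneg : n * log n - n ≤ x * log x - x := by
    nlinarith [mul_log_sub_log_le (x := n) (y := x) (by linarith) (by linarith)]
  have increment_le : x * log x - x ≤ n * log n - n + log x := by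
    nlinarith [mul_log_sub_log_le (x := x) (y := n) (by linarith) (by linarith)]
  rw [abs_le]
  constructor <;> linarith

/-- Chebyshev's combination `⌊n⌋ - ⌊n/2⌋ - ⌊n/3⌋ - ⌊n/5⌋ + ⌊n/30⌋`, the weight in his estimates of
`ψ`. The floors are natural-number divisions, cast to `ℤ` so that subtraction does not truncate. -/
def chebyshevWeight (n : ℕ) : ℤ :=
  n - (n / 2 : ℕ) - (n / 3 : ℕ) - (n / 5 : ℕ) + (n / 30 : ℕ)

/-- Chebyshev's constant `A ≈ 0.9213`, the density of `∑_{d ≤ N} Λ(d) chebyshevWeight (N / d)`. -/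
noncomputable def chebyshevConst : ℝ := log 2 / 2 + log 3 / 3 + log 5 / 5 - log 30 / 30

lemma sum_vonMangoldt_mul_chebyshevWeight (N : ℕ) :
    ∑ d ∈ Ioc 0 N, Λ d * chebyshevWeight (N / d) =
      log N ! - log (N / 2)! - log (N / 3)! - log (N / 5)! + log (N / 30)! := by
  have hN := log_factorial_div_eq_sum N 1
  simp only [Nat.div_one] at hN
  simp only [hN, log_factorial_div_eq_sum, ← sum_add_distrib, ← sum_sub_distrib]
  refine sum_congr rfl fun d _ ↦ ?_
  simp only [chebyshevWeight, Int.cast_add, Int.cast_sub, Int.cast_natCast]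
  ring

lemma abs_log_factorial_div_sub_le {N k : ℕ} (hk : 0 < k) (hkN : k ≤ N) :
    |log (N / k)! - N / k * (log N - log k - 1)| ≤ log N + 1 := by
  have hk1 : (1 : ℝ) ≤ k := by exact_mod_cast hk
  have hN0 : (0 : ℝ) < N := by exact_mod_cast hk.trans_le hkN
  have hx : (1 : ℝ) ≤ N / k := (one_le_div (by positivity)).2 (by exact_mod_cast hkN)
  have key := abs_log_factorial_floor_sub_le hx
  rw [Nat.floor_div_eq_div, log_div hN0.ne' (by positivity)] at key
  have hlogk : 0 ≤ log k := log_nonneg hk1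
  calc _ = |log (N / k)! - (N / k * (log N - log k) - N / k)| := by ring_nf
    _ ≤ log N - log k + 1 := key
    _ ≤ log N + 1 := by linarith

lemma abs_sum_vonMangoldt_mul_chebyshevWeight_sub_le {N : ℕ} (hN : 30 ≤ N) :
    |∑ d ∈ Ioc 0 N, Λ d * chebyshevWeight (N / d) - chebyshevConst * N| ≤ 5 * (log N + 1) := by
  have bound (k : ℕ) (hk : 0 < k) (hk30 : k ≤ 30) :=
    abs_le.1 (abs_log_factorial_div_sub_le hk (hk30.trans hN))
  have h1 := bound 1 (by norm_num) (by norm_num)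
  have h2 := bound 2 (by norm_num) (by norm_num)
  have h3 := bound 3 (by norm_num) (by norm_num)
  have h5 := bound 5 (by norm_num) (by norm_num)
  have h30 := bound 30 (by norm_num) le_rfl
  push_cast at h1 h2 h3 h5 h30
  rw [Nat.div_one, log_one] at h1
  rw [sum_vonMangoldt_mul_chebyshevWeight, chebyshevConst, abs_le]
  constructor <;> linarith

lemma lt_chebyshevConst : 0.921 < chebyshevConst := by
  have h30 : log 30 = log 2 + log 3 + log 5 := by
    rw [← log_mul, ← log_mul] <;> norm_num
  rw [chebyshevConst, h30]
  linarith [log_two_gt_d9, log_three_gt_d9, log_five_gt_d9]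

lemma abs_sum_Ioc_mul_le_of_sum_mem_Icc {R : Type*} [CommRing R] [LinearOrder R]
    [IsStrictOrderedRing R] {c f : ℕ → R} (hc : ∀ n, ∑ k ∈ Ioc 0 n, c k ∈ Set.Icc 0 1)
    (hf : Monotone f) (hf0 : 0 ≤ f 0) (n : ℕ) :
    |∑ k ∈ Ioc 0 n, c k * f k| ≤ f n := by
  have key : (∑ k ∈ Ioc 0 n, c k - 1) * f n ≤ ∑ k ∈ Ioc 0 n, c k * f k ∧
      ∑ k ∈ Ioc 0 n, c k * f k ≤ (∑ k ∈ Ioc 0 n, c k) * f n := by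
    induction n with
    | zero => simpa using hf0
    | succ n ih =>
      obtain ⟨hc0, hc1⟩ := hc n
      have hmono := hf n.le_succ
      rw [sum_Ioc_succ_top n.zero_le, sum_Ioc_succ_top n.zero_le]
      constructor <;> nlinarith
  have hfn : 0 ≤ f n := hf0.trans (hf n.zero_le)
  obtain ⟨hc0, hc1⟩ := hc n
  have sum_mul_nonneg := mul_nonneg hc0 hfn
  have sum_mul_le := mul_le_mul_of_nonneg_right hc1 hfn
  rw [abs_le]
  constructor <;> linarith

/-- The partial sum `χ₄(1) + ⋯ + χ₄(n)`, the analogue of `n` for the character `χ₄`. -/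
def chiFourSum (n : ℕ) : ℤ := ∑ k ∈ Ioc 0 n, χ₄ k

lemma chiFourSum_eq_ite (n : ℕ) :
    chiFourSum n = if n % 4 = 1 ∨ n % 4 = 2 then 1 else 0 := by
  induction n with
  | zero => simp [chiFourSum]
  | succ n ih =>
    rw [chiFourSum, sum_Ioc_succ_top n.zero_le, ← chiFourSum, ih, χ₄_nat_eq_if_mod_four]
    grind

lemma abs_sum_chiFour_mul_log_le (n : ℕ) : |∑ k ∈ Ioc 0 n, (χ₄ k : ℝ) * log k| ≤ log n := by
  refine abs_sum_Ioc_mul_le_of_sum_mem_Icc (f := fun k ↦ log k) (fun n ↦ ?_)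
    (fun a b hab ↦ ?_) (by simp) n
  · rw [← Int.cast_sum, ← chiFourSum, chiFourSum_eq_ite]
    split_ifs <;> simp
  · rcases a.eq_zero_or_pos with rfl | ha
    · simpa using log_natCast_nonneg b
    · exact log_le_log (by exact_mod_cast ha) (by exact_mod_cast hab)

lemma sum_chiFour_mul_log_div_eq (N k : ℕ) :
    ∑ n ∈ Ioc 0 (N / k), (χ₄ n : ℝ) * log n =
      ∑ d ∈ Ioc 0 N, Λ d * (χ₄ d * chiFourSum (N / d / k)) := by
  have key := sum_Ioc_mul_log_eq (f := fun n ↦ (χ₄ n : ℝ))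
    (fun a b ↦ by rw [Nat.cast_mul, map_mul, Int.cast_mul]) (N / k)
  simp only [← Int.cast_sum, ← chiFourSum.eq_1] at key
  rw [key, sum_Ioc_div_mul_eq (fun d ↦ (χ₄ d : ℝ) * Λ d) (G := fun n ↦ (chiFourSum n : ℝ))
    (by simp [chiFourSum])]
  exact sum_congr rfl fun d _ ↦ by ring

/-- The function `P` weighting `d` by `P(N / d)` regardless of its residue modulo `4`. Subtracting
the dilate of Chebyshev's weight keeps `P(1) = 1` and makes `P` vanish on `2 ≤ n ≤ 5`. -/
def principalWeight (n : ℕ) : ℤ := chebyshevWeight n - chebyshevWeight (n / 2)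

/-- The function `Q` weighting `d` by `χ₄(d) Q(N / d)`: a combination of dilates of `chiFourSum`
with `Q(1) = 1` for which `P + |Q|` stays small away from `1`. -/
def chiFourWeight (n : ℕ) : ℤ :=
  chiFourSum n - chiFourSum (n / 2) + chiFourSum (n / 3) - chiFourSum (n / 6)

lemma principalWeight_mod (n : ℕ) : principalWeight (n % 120) = principalWeight n := by
  simp only [principalWeight, chebyshevWeight, Nat.div_div_eq_div_mul]
  omega

lemma chiFourWeight_mod (n : ℕ) : chiFourWeight (n % 120) = chiFourWeight n := by
  have h1 : n % 120 % 4 = n % 4 := by omega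
  have h2 : n % 120 / 2 % 4 = n / 2 % 4 := by omega
  have h3 : n % 120 / 3 % 4 = n / 3 % 4 := by omega
  have h6 : n % 120 / 6 % 4 = n / 6 % 4 := by omega
  simp only [chiFourWeight, chiFourSum_eq_ite, h1, h2, h3, h6]

lemma principalWeight_add_abs_chiFourWeight_le_two (n : ℕ) :
    principalWeight n + |chiFourWeight n| ≤ 2 := by
  have residues : ∀ r < 120, principalWeight r + |chiFourWeight r| ≤ 2 := by
    simp only [chiFourWeight, chiFourSum_eq_ite]
    decide +kernel
  simpa only [principalWeight_mod, chiFourWeight_mod] using residues (n % 120) (n.mod_lt (by simp))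

lemma principalWeight_add_abs_chiFourWeight_le {n : ℕ} (hn : 2 ≤ n) :
    principalWeight n + |chiFourWeight n| ≤
      (if 5 ≤ n then 1 else 0) + if 11 ≤ n then 1 else 0 := by
  rcases lt_or_ge n 11 with h11 | h11
  · simp only [chiFourWeight, chiFourSum_eq_ite]
    interval_cases n <;> decide
  · simpa [h11, (by omega : 5 ≤ n)] using principalWeight_add_abs_chiFourWeight_le_two n

/-- The total weight `∑_{d ≤ N} Λ(d) (P(N / d) + χ₄(d) Q(N / d))`, which separates the primes in
`(N / 2, N]` by their residue modulo `4`. -/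
noncomputable def weightedMangoldtSum (N : ℕ) : ℝ :=
  ∑ d ∈ Ioc 0 N, Λ d * (principalWeight (N / d) + χ₄ d * chiFourWeight (N / d))

lemma weightedMangoldtSum_eq (N : ℕ) :
    weightedMangoldtSum N =
      ∑ d ∈ Ioc 0 N, Λ d * chebyshevWeight (N / d) -
        ∑ d ∈ Ioc 0 (N / 2), Λ d * chebyshevWeight (N / 2 / d) +
      (∑ n ∈ Ioc 0 N, (χ₄ n : ℝ) * log n - ∑ n ∈ Ioc 0 (N / 2), (χ₄ n : ℝ) * log n +
        ∑ n ∈ Ioc 0 (N / 3), (χ₄ n : ℝ) * log n - ∑ n ∈ Ioc 0 (N / 6), (χ₄ n : ℝ) * log n) := by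
  have hN := sum_chiFour_mul_log_div_eq N 1
  simp only [Nat.div_one] at hN
  rw [sum_Ioc_div_mul_eq Λ (G := fun n ↦ (chebyshevWeight n : ℝ)) (by simp [chebyshevWeight])]
  simp only [hN, sum_chiFour_mul_log_div_eq, ← sum_add_distrib, ← sum_sub_distrib,
    weightedMangoldtSum]
  refine sum_congr rfl fun d _ ↦ ?_
  simp only [principalWeight, chiFourWeight]
  push_cast
  ring

lemma le_weightedMangoldtSum {N : ℕ} (hN : 60 ≤ N) :
    chebyshevConst / 2 * N - 14 * log N - 10 ≤ weightedMangoldtSum N := by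
  have log_div_le (k : ℕ) (hk : 0 < k) (hkN : k ≤ N) : log (N / k : ℕ) ≤ log N :=
    log_le_log (by exact_mod_cast Nat.div_pos hkN hk) (by exact_mod_cast N.div_le_self k)
  have cheb1 := abs_le.1 (abs_sum_vonMangoldt_mul_chebyshevWeight_sub_le (by omega : 30 ≤ N))
  have cheb2 := abs_le.1 (abs_sum_vonMangoldt_mul_chebyshevWeight_sub_le (by omega : 30 ≤ N / 2))
  have half_le : chebyshevConst * (N / 2 : ℕ) ≤ chebyshevConst * (N / 2) := by
    have const_pos := lt_chebyshevConst
    gcongr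
    exact Nat.cast_div_le
  have chi1 := abs_le.1 (abs_sum_chiFour_mul_log_le N)
  have chi2 := abs_le.1 (abs_sum_chiFour_mul_log_le (N / 2))
  have chi3 := abs_le.1 (abs_sum_chiFour_mul_log_le (N / 3))
  have chi6 := abs_le.1 (abs_sum_chiFour_mul_log_le (N / 6))
  have log2 := log_div_le 2 (by norm_num) (by omega)
  have log3 := log_div_le 3 (by norm_num) (by omega)
  have log6 := log_div_le 6 (by norm_num) (by omega)
  rw [weightedMangoldtSum_eq]
  linarith

lemma principalWeight_add_chiFour_mul_le {n : ℕ} (hn : 2 ≤ n) (d : ℕ) :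
    principalWeight n + χ₄ d * chiFourWeight n ≤
      (if 5 ≤ n then 1 else 0) + if 11 ≤ n then 1 else 0 := by
  have abs_chi_le : |χ₄ d| ≤ 1 := by
    rw [χ₄_nat_eq_if_mod_four]
    split_ifs <;> simp
  calc principalWeight n + χ₄ d * chiFourWeight n
      ≤ principalWeight n + |χ₄ d| * |chiFourWeight n| := by
        rw [← abs_mul]
        gcongr
        exact le_abs_self _
    _ ≤ principalWeight n + |chiFourWeight n| := by
        gcongr
        exact mul_le_of_le_one_left (abs_nonneg _) abs_chi_le
    _ ≤ _ := principalWeight_add_abs_chiFourWeight_le hn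

lemma one_add_chiFour_le_of_two_lt {d : ℕ} (hd : 2 < d) :
    1 + χ₄ d ≤ 2 * (if ¬ d.Prime then 1 else 0) +
      2 * if d.Prime ∧ d % 4 = 1 then 1 else 0 := by
  have prime_odd (hp : d.Prime) : d % 2 = 1 := hp.eq_two_or_odd.resolve_left hd.ne'
  rw [χ₄_nat_eq_if_mod_four]
  grind

lemma principalWeight_div_add_chiFour_mul_le {N d : ℕ} (hN : 4 ≤ N) (hd : d ∈ Ioc 0 N) :
    principalWeight (N / d) + χ₄ d * chiFourWeight (N / d) ≤
      (if 5 ≤ N / d then 1 else 0) + (if 11 ≤ N / d then 1 else 0) +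
        2 * (if ¬ d.Prime then 1 else 0) +
        2 * if N / 2 < d ∧ d.Prime ∧ d % 4 = 1 then 1 else 0 := by
  obtain ⟨hd0, hdN⟩ := mem_Ioc.1 hd
  rcases le_or_gt d (N / 2) with hd2 | hd2
  · have two_le : 2 ≤ N / d := (Nat.le_div_iff_mul_le hd0).2 (by omega)
    have weight_le := principalWeight_add_chiFour_mul_le two_le d
    split_ifs at * <;> omega
  · have div_eq_one : N / d = 1 := Nat.div_eq_of_lt_le (by omega) (by omega)
    have principalWeight_one : principalWeight 1 = 1 := by decide
    have chiFourWeight_one : chiFourWeight 1 = 1 := by simp [chiFourWeight, chiFourSum_eq_ite]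
    simpa [div_eq_one, principalWeight_one, chiFourWeight_one, hd2] using
      one_add_chiFour_le_of_two_lt (by omega : 2 < d)

lemma sum_log_prime_eq_sum_vonMangoldt (N M : ℕ) (S : ℕ → Prop) [DecidablePred S] :
    ∑ p ∈ Ioc M N with p.Prime ∧ S p, log p =
      ∑ d ∈ Ioc 0 N, Λ d * if M < d ∧ d.Prime ∧ S d then 1 else 0 := by
  simp_rw [mul_ite, mul_one, mul_zero, ← sum_filter]
  refine sum_congr (by grind) fun p hp ↦ ?_
  rw [mem_filter] at hp
  exact (vonMangoldt_apply_prime hp.2.2.1).symm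

lemma weightedMangoldtSum_le {N : ℕ} (hN : 4 ≤ N) :
    weightedMangoldtSum N ≤ ψ (N / 5) + ψ (N / 11) + 2 * (ψ N - θ N) +
      2 * ∑ p ∈ Ioc (N / 2) N with p.Prime ∧ p % 4 = 1, log p := by
  have psi5 := psi_div_eq_sum N (by norm_num : 0 < 5)
  have psi11 := psi_div_eq_sum N (by norm_num : 0 < 11)
  push_cast at psi5 psi11
  rw [psi5, psi11, Chebyshev.psi_sub_theta_eq_sum_not_prime, Nat.floor_natCast, sum_filter,
    sum_log_prime_eq_sum_vonMangoldt N (N / 2) (· % 4 = 1), mul_sum, mul_sum,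
    ← sum_add_distrib, ← sum_add_distrib, ← sum_add_distrib]
  refine sum_le_sum fun d hd ↦ ?_
  have weight_le : (principalWeight (N / d) + χ₄ d * chiFourWeight (N / d) : ℝ) ≤
      (if 5 ≤ N / d then 1 else 0) + (if 11 ≤ N / d then 1 else 0) +
        2 * (if ¬ d.Prime then 1 else 0) +
        2 * if N / 2 < d ∧ d.Prime ∧ d % 4 = 1 then 1 else 0 := by
    exact_mod_cast principalWeight_div_add_chiFour_mul_le hN hd
  refine (mul_le_mul_of_nonneg_left weight_le vonMangoldt_nonneg).trans_eq ?_
  rw [← mul_boole (¬ d.Prime) (Λ d)]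
  ring

lemma psi_div_le {N k : ℕ} (hk : 0 < k) (hkN : k ≤ N) :
    ψ (N / k) ≤ log 4 * (N / k) + 2 * √N * log N := by
  have hk1 : (1 : ℝ) ≤ k := by exact_mod_cast hk
  have hx : (1 : ℝ) ≤ N / k := (one_le_div (by positivity)).2 (by exact_mod_cast hkN)
  have hxN : (N / k : ℝ) ≤ N := div_le_self N.cast_nonneg hk1
  have hlog : 0 ≤ log (N / k : ℝ) := log_nonneg hx
  refine (Chebyshev.psi_le hx).trans ?_
  gcongr

lemma le_sum_log_prime_one_mod_four {N : ℕ} (hN : 60 ≤ N) :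
    (chebyshevConst / 2 - 16 / 55 * log 4) * N - 8 * √N * log N - 14 * log N - 10 ≤
      2 * ∑ p ∈ Ioc (N / 2) N with p.Prime ∧ p % 4 = 1, log p := by
  have lower := le_weightedMangoldtSum hN
  have upper := weightedMangoldtSum_le (by omega : 4 ≤ N)
  have psi5 := psi_div_le (by norm_num : 0 < 5) (by omega : 5 ≤ N)
  have psi11 := psi_div_le (by norm_num : 0 < 11) (by omega : 11 ≤ N)
  have prime_powers := Chebyshev.psi_sub_theta_le (x := N) (by exact_mod_cast (by omega : 1 ≤ N))
  push_cast at psi5 psi11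
  linarith

lemma log_le_mul_sqrt_of_two_pow_le {x : ℝ} (hx : 2 ^ 24 ≤ x) : log x ≤ 17 / 2 ^ 12 * √x := by
  have hexp : exp 2 ≤ 2 ^ 24 := by
    calc exp 2 = exp 1 ^ 2 := by rw [← exp_nat_mul]; norm_num
      _ ≤ 3 ^ 2 := by gcongr; exact exp_one_lt_three.le
      _ ≤ 2 ^ 24 := by norm_num
  have hsqrt : √(2 ^ 24 : ℝ) = 2 ^ 12 := by
    rw [sqrt_eq_iff_mul_self_eq] <;> norm_num
  rw [← div_le_iff₀ (sqrt_pos.2 (by linarith))]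
  calc log x / √x ≤ log (2 ^ 24) / √(2 ^ 24) :=
        log_div_sqrt_antitoneOn (Set.mem_Ici.2 hexp) (Set.mem_Ici.2 (hexp.trans hx)) hx
    _ ≤ 17 / 2 ^ 12 := by
        rw [hsqrt, log_pow]
        push_cast
        linarith [log_two_lt_d9]

lemma exists_prime_one_mod_four_of_two_pow_le {m : ℕ} (hm : 2 ^ 23 ≤ m) :
    ∃ p, (p.Prime ∧ p % 4 = 1) ∧ m < p ∧ p ≤ 2 * m := by
  have hN : (2 : ℝ) ^ 24 ≤ (2 * m : ℕ) := by exact_mod_cast (by omega : 2 ^ 24 ≤ 2 * m)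
  have bound := le_sum_log_prime_one_mod_four (by omega : 60 ≤ 2 * m)
  rw [Nat.mul_div_cancel_left m two_pos] at bound
  have main_term : 0.057 * ((2 * m : ℕ) : ℝ) ≤
      (chebyshevConst / 2 - 16 / 55 * log 4) * (2 * m : ℕ) := by
    have hlog4 : log 4 = 2 * log 2 := by
      rw [← log_rpow] <;> norm_num
    gcongr
    linarith [lt_chebyshevConst, log_two_lt_d9]
  have hlog := log_le_mul_sqrt_of_two_pow_le hN
  generalize ((2 * m : ℕ) : ℝ) = N at *
  have hss : √N * √N = N := mul_self_sqrt (by linarith)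
  have hs : 2 ^ 12 ≤ √N := le_sqrt_of_sq_le (by linarith)
  have sqrt_mul_log_le : √N * log N ≤ 17 / 2 ^ 12 * N := by nlinarith
  have log_le : log N ≤ 17 / 2 ^ 24 * N := by nlinarith
  have sum_pos : 0 < ∑ p ∈ Ioc m (2 * m) with p.Prime ∧ p % 4 = 1, log p := by linarith
  obtain ⟨p, hp⟩ := nonempty_of_sum_ne_zero sum_pos.ne'
  rw [mem_filter, mem_Ioc] at hp
  exact ⟨p, hp.2, hp.1⟩

lemma exists_mem_lt_and_le_two_mul_of_isChain {a m : ℕ} {l : List ℕ}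
    (hl : (a :: l).IsChain fun p q ↦ q ≤ 2 * p) (ham : a ≤ m)
    (hm : m < (a :: l).getLast (List.cons_ne_nil a l)) : ∃ p ∈ l, m < p ∧ p ≤ 2 * m := by
  induction l generalizing a with
  | nil => exact absurd hm (by simpa using ham)
  | cons b l ih =>
    rw [List.isChain_cons_cons] at hl
    rcases lt_or_ge m b with hmb | hbm
    · exact ⟨b, List.mem_cons_self, hmb, hl.1.trans (by omega)⟩
    · obtain ⟨p, hp, hmp⟩ := ih hl.2 hbm (by simpa using hm)
      exact ⟨p, List.mem_cons_of_mem b hp, hmp⟩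

/-- Primes `1` modulo `4`, each at most twice its predecessor; the first is at most `2 * 7`. -/
def bertrandPrimes : List ℕ :=
  [13, 17, 29, 53, 101, 197, 389, 773, 1493, 2969, 5897, 11789, 23561, 47093, 94169, 188333,
    376657, 753257, 1506509, 3012949, 6025889, 12051769]

lemma prime_and_mod_four_eq_one_of_mem_bertrandPrimes :
    ∀ p ∈ bertrandPrimes, p.Prime ∧ p % 4 = 1 := by
  simp only [bertrandPrimes, List.forall_mem_cons]
  norm_num

lemma exists_prime_one_mod_four_lt_and_le_two_mul {m : ℕ} (hm : 7 ≤ m) :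
    ∃ p, (p.Prime ∧ p % 4 = 1) ∧ m < p ∧ p ≤ 2 * m := by
  rcases lt_or_ge m 12051769 with hlt | hge
  · obtain ⟨p, hp, hmp⟩ := exists_mem_lt_and_le_two_mul_of_isChain (a := 7) (l := bertrandPrimes)
      (by decide) hm hlt
    exact ⟨p, prime_and_mod_four_eq_one_of_mem_bertrandPrimes p hp, hmp⟩
  · exact exists_prime_one_mod_four_of_two_pow_le (by omega)

/-- **Lemma 1 (first half).**
For every real `x ≥ 7`, the half-open interval `(x, 2x]` contains a prime number
congruent to `1` modulo `4`. -/
theorem stmt2 (x : ℝ) (hx : 7 ≤ x) :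
    ∃ p : ℕ, p.Prime ∧ p % 4 = 1 ∧ x < p ∧ (p : ℝ) ≤ 2 * x := by
  have hx0 : 0 ≤ x := by linarith
  obtain ⟨p, ⟨hp, hp4⟩, hlt, hle⟩ :=
    exists_prime_one_mod_four_lt_and_le_two_mul (Nat.le_floor (by exact_mod_cast hx) : 7 ≤ ⌊x⌋₊)
  refine ⟨p, hp, hp4, (Nat.floor_lt hx0).1 hlt, ?_⟩
  calc (p : ℝ) ≤ 2 * ⌊x⌋₊ := by exact_mod_cast hle
    _ ≤ 2 * x := by gcongr; exact Nat.floor_le hx0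
end

section
/- For every real (equivalently, integer) x ≥ 7, the half-open interval (x, 2x] contains a prime number congruent to 3 modulo 4. -/
/-!
This is Chebyshev's method in the residue classes modulo `4`. Comparing the logarithms of the
integers `n ≤ M` in a class `a` modulo `4` with those of the integers `n ≤ M / 4` gives a quantity
`D a M = ⌊M / 4⌋ log 4 + O(log M)`. By `log n = ∑ d ∣ n, Λ d` it is also a sum
`∑ Λ d * w (M / d)`, in which for odd `d` the weight `w q` is the indicator of
`q % 4 ≥ a * d % 4`. In the combination

  `D 3 N - D 3 (N / 2) - D 1 (N / 3) - D 3 (N / 17)`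

the weight of `d` is nonpositive unless `d % 4 = 3` and `N / d = 1` or `N / d ≥ 73`, and then it
is at most `1`. The main term is `(11 / 408) N log 4`, and Chebyshev's bound for `ψ (N / 73)` is
about `(1 / 73) N log 4`, which is smaller. For large `N` there is therefore a contribution from
`N / d = 1` that prime powers, being too sparse, cannot account for: a prime in `(N / 2, N]` that
is `3` modulo `4`. For small `N` a list of such primes, each less than twice its predecessor,
suffices.
-/

open Finset Real
open scoped ArithmeticFunction.vonMangoldt Chebyshev

theorem monotone_log_natCast : Monotone fun n : ℕ ↦ log n := by
  intro m n hmn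
  rcases m.eq_zero_or_pos with rfl | hm
  · simpa using log_natCast_nonneg n
  · exact log_le_log (mod_cast hm) (mod_cast hmn)

theorem log_natCast_div_le (n k : ℕ) : log (n / k : ℕ) ≤ log n :=
  monotone_log_natCast (Nat.div_le_self n k)

theorem sum_Ioc_sum_divisors {R : Type*} [AddCommMonoid R] (f : ℕ → ℕ → R) {M N : ℕ}
    (hMN : M ≤ N) :
    ∑ n ∈ Ioc 0 M, ∑ d ∈ n.divisors, f d n =
      ∑ d ∈ Ioc 0 N, ∑ m ∈ Ioc 0 (M / d), f d (d * m) := by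
  rw [sum_sigma', sum_sigma']
  refine sum_bij' (fun x _ ↦ ⟨x.2, x.1 / x.2⟩) (fun y _ ↦ ⟨y.1 * y.2, y.1⟩) ?_ ?_ ?_ ?_ ?_
  · rintro ⟨n, d⟩ h
    simp only [mem_sigma, mem_Ioc, Nat.mem_divisors] at h ⊢
    obtain ⟨⟨hn, hnM⟩, hdn, -⟩ := h
    have hdn' := Nat.le_of_dvd hn hdn
    have hd := Nat.pos_of_dvd_of_pos hdn hn
    exact ⟨⟨hd, by omega⟩, Nat.div_pos hdn' hd, Nat.div_le_div_right hnM⟩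
  · rintro ⟨d, m⟩ h
    simp only [mem_sigma, mem_Ioc, Nat.mem_divisors] at h ⊢
    obtain ⟨⟨hd, -⟩, hm, hmM⟩ := h
    have hdm : d * m ≤ M := (Nat.mul_le_mul_left d hmM).trans (Nat.mul_div_le M d)
    exact ⟨⟨by positivity, hdm⟩, dvd_mul_right d m, by positivity⟩
  · rintro ⟨n, d⟩ h
    simp only [mem_sigma, Nat.mem_divisors] at h
    simp [Nat.mul_div_cancel' h.2.1]
  · rintro ⟨d, m⟩ h
    simp only [mem_sigma, mem_Ioc] at h
    simp [Nat.mul_div_cancel_left m h.1.1]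
  · rintro ⟨n, d⟩ h
    simp only [mem_sigma, Nat.mem_divisors] at h
    simp [Nat.mul_div_cancel' h.2.1]

theorem sum_Ioc_filter_log_eq_sum_vonMangoldt (P : ℕ → Prop) [DecidablePred P] {M N : ℕ}
    (hMN : M ≤ N) :
    ∑ n ∈ Ioc 0 M with P n, log n = ∑ d ∈ Ioc 0 N, Λ d * #{m ∈ Ioc 0 (M / d) | P (d * m)} := by
  calc ∑ n ∈ Ioc 0 M with P n, log n
      = ∑ n ∈ Ioc 0 M, ∑ d ∈ n.divisors, if P n then Λ d else 0 := by
        rw [sum_filter]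
        refine sum_congr rfl fun n _ ↦ ?_
        split_ifs
        · exact ArithmeticFunction.vonMangoldt_sum.symm
        · exact sum_const_zero.symm
    _ = ∑ d ∈ Ioc 0 N, ∑ m ∈ Ioc 0 (M / d), if P (d * m) then Λ d else 0 :=
        sum_Ioc_sum_divisors _ hMN
    _ = ∑ d ∈ Ioc 0 N, Λ d * #{m ∈ Ioc 0 (M / d) | P (d * m)} := by
        simp only [← sum_filter, sum_const, nsmul_eq_mul, mul_comm]

theorem sum_Ioc_log_eq_sum_vonMangoldt {M N : ℕ} (hMN : M ≤ N) :
    ∑ n ∈ Ioc 0 M, log n = ∑ d ∈ Ioc 0 N, Λ d * (M / d : ℕ) := by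
  simpa using sum_Ioc_filter_log_eq_sum_vonMangoldt (fun _ ↦ True) hMN

/-- The logarithm of the product of the positive integers `n ≤ M` in the class of `a` modulo `k`,
minus `log ⌊M / k⌋!`. It plays the role of the logarithm of a binomial coefficient in Chebyshev's
method: subtracting the factorial cancels the `M log M` term. -/
noncomputable def logExcess (k a M : ℕ) : ℝ :=
  ∑ n ∈ Ioc 0 M with n ≡ a [MOD k], log n - ∑ n ∈ Ioc 0 (M / k), log n

/-- The coefficient of `Λ d` in `logExcess k a M`, as a function of `q = M / d`. -/
def excessWeight (k a d q : ℕ) : ℤ :=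
  #{m ∈ Ioc 0 q | d * m ≡ a [MOD k]} - (q / k : ℕ)

theorem logExcess_eq_sum_vonMangoldt (k a : ℕ) {M N : ℕ} (hMN : M ≤ N) :
    logExcess k a M = ∑ d ∈ Ioc 0 N, Λ d * excessWeight k a d (M / d) := by
  rw [logExcess, sum_Ioc_filter_log_eq_sum_vonMangoldt _ hMN,
    sum_Ioc_log_eq_sum_vonMangoldt ((Nat.div_le_self M k).trans hMN), ← sum_sub_distrib]
  refine sum_congr rfl fun d _ ↦ ?_
  rw [excessWeight, Nat.div_right_comm M k d, ← mul_sub]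
  norm_cast

section ResidueClass

variable {k a : ℕ}

theorem lt_add_sub_div_iff (hk : 0 < k) (hak : a ≤ k) {M j : ℕ} :
    j < (M + k - a) / k ↔ k * j + a ≤ M := by
  rw [← Nat.add_one_le_iff, Nat.le_div_iff_mul_le hk, add_one_mul, mul_comm k]
  omega

theorem sum_Ioc_filter_modEq {R : Type*} [AddCommMonoid R] (f : ℕ → R) (ha : 0 < a) (hak : a < k)
    (M : ℕ) :
    ∑ n ∈ Ioc 0 M with n ≡ a [MOD k], f n = ∑ j ∈ range ((M + k - a) / k), f (k * j + a) := by
  have hk : 0 < k := ha.trans hak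
  symm
  refine sum_nbij' (fun j ↦ k * j + a) (· / k) ?_ ?_ ?_ ?_ fun _ _ ↦ rfl
  · intro j hj
    rw [mem_range, lt_add_sub_div_iff hk hak.le] at hj
    simp only [mem_filter, mem_Ioc]
    exact ⟨⟨by omega, hj⟩, by simp [Nat.ModEq]⟩
  · intro n hn
    simp only [mem_filter, mem_Ioc, Nat.ModEq, Nat.mod_eq_of_lt hak] at hn
    rw [mem_range, lt_add_sub_div_iff hk hak.le, ← hn.2, Nat.div_add_mod]
    exact hn.1.2
  · intro j _
    simp [Nat.mul_add_div hk, Nat.div_eq_of_lt hak]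
  · intro n hn
    simp only [mem_filter, Nat.ModEq, Nat.mod_eq_of_lt hak] at hn
    rw [← hn.2, Nat.div_add_mod]

theorem card_Ioc_filter_modEq (ha : 0 < a) (hak : a < k) (M : ℕ) :
    #{n ∈ Ioc 0 M | n ≡ a [MOD k]} = M / k + if a ≤ M % k then 1 else 0 := by
  have hk : 0 < k := ha.trans hak
  rw [card_eq_sum_ones, sum_Ioc_filter_modEq _ ha hak, ← card_eq_sum_ones, card_range]
  have hM : M + k - a = (M % k + k - a) + k * (M / k) := by
    have := Nat.mod_add_div M k
    omega
  have hr := Nat.mod_lt M hk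
  rw [hM, Nat.add_mul_div_left _ _ hk, add_comm, Nat.add_left_cancel_iff]
  split_ifs with h
  · exact Nat.div_eq_of_lt_le (by omega) (by omega)
  · exact Nat.div_eq_of_lt (by omega)

theorem excessWeight_of_coprime {b d : ℕ} (hb : 0 < b) (hbk : b < k) (hd : d.Coprime k)
    (hdb : d * b ≡ a [MOD k]) (q : ℕ) :
    excessWeight k a d q = if b ≤ q % k then 1 else 0 := by
  have solve (m : ℕ) : d * m ≡ a [MOD k] ↔ m ≡ b [MOD k] :=
    ⟨fun h ↦ Nat.ModEq.cancel_left_of_coprime hd.symm (h.trans hdb.symm),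
      fun h ↦ (h.mul_left d).trans hdb⟩
  simp only [excessWeight, solve, card_Ioc_filter_modEq hb hbk]
  push_cast
  ring

theorem excessWeight_of_gcd_not_dvd {d : ℕ} (hd : ¬ d.gcd k ∣ a) (q : ℕ) :
    excessWeight k a d q = -(q / k : ℕ) := by
  have no_solution (m : ℕ) : ¬ d * m ≡ a [MOD k] := fun h ↦
    hd <| (h.dvd_iff (Nat.gcd_dvd_right d k)).mp ((Nat.gcd_dvd_left d k).mul_right m)
  simp [excessWeight, no_solution]

theorem sum_range_log_mul_add_one (hk : k ≠ 0) (n : ℕ) :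
    ∑ j ∈ range n, log (k * (j + 1) : ℕ) = n * log k + ∑ j ∈ Ioc 0 n, log j := by
  induction n with
  | zero => simp
  | succ n ih =>
    rw [sum_range_succ, sum_Ioc_succ_top n.zero_le, ih, Nat.cast_mul,
      log_mul (mod_cast hk) (mod_cast n.succ_ne_zero)]
    push_cast
    ring

theorem logExcess_le (ha : 0 < a) (hak : a < k) (M : ℕ) :
    logExcess k a M ≤ (M / k : ℕ) * log k + log M := by
  have hk : 0 < k := ha.trans hak
  have term_le (j : ℕ) : log (k * j + a : ℕ) ≤ log (k * (j + 1) : ℕ) :=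
    monotone_log_natCast (by rw [mul_add_one]; omega)
  have sum_le : ∑ j ∈ range ((M + k - a) / k), log (k * j + a : ℕ) ≤
      ∑ j ∈ range (M / k), log (k * (j + 1) : ℕ) + log M := by
    cases hc : (M + k - a) / k with
    | zero =>
      rw [sum_range_zero]
      exact add_nonneg (sum_nonneg fun _ _ ↦ log_natCast_nonneg _) (log_natCast_nonneg M)
    | succ c =>
      have last_le : k * c + a ≤ M := (lt_add_sub_div_iff hk hak.le).mp (by omega)
      have hcM : c ≤ M / k := (Nat.le_div_iff_mul_le hk).mpr (by rw [mul_comm]; omega)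
      rw [sum_range_succ]
      refine add_le_add ?_ (monotone_log_natCast last_le)
      exact (sum_le_sum fun j _ ↦ term_le j).trans <|
        sum_le_sum_of_subset_of_nonneg (range_mono hcM) fun _ _ _ ↦ log_natCast_nonneg _
  rw [sum_range_log_mul_add_one hk.ne'] at sum_le
  rw [logExcess, sum_Ioc_filter_modEq _ ha hak]
  linarith

theorem le_logExcess (ha : 0 < a) (hak : a < k) (M : ℕ) :
    (M / k : ℕ) * log k - log M ≤ logExcess k a M := by
  have hk : 0 < k := ha.trans hak
  have le_length : M / k ≤ (M + k - a) / k := Nat.div_le_div_right (by omega)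
  -- The `j = 0` term on the left is `log 0 = 0`.
  have term_le (j : ℕ) : log (k * j : ℕ) ≤ log (k * j + a : ℕ) :=
    monotone_log_natCast (Nat.le_add_right _ _)
  have last_le : log (k * (M / k) : ℕ) ≤ log M := monotone_log_natCast (Nat.mul_div_le M k)
  have shift : ∑ j ∈ range (M / k), log (k * j : ℕ) + log (k * (M / k) : ℕ) =
      ∑ j ∈ range (M / k), log (k * (j + 1) : ℕ) := by
    rw [← sum_range_succ (fun j ↦ log (k * j : ℕ)), sum_range_succ']
    simp
  have le_sum : ∑ j ∈ range (M / k), log (k * j : ℕ) ≤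
      ∑ j ∈ range ((M + k - a) / k), log (k * j + a : ℕ) :=
    (sum_le_sum fun j _ ↦ term_le j).trans <|
      sum_le_sum_of_subset_of_nonneg (range_mono le_length) fun _ _ _ ↦ log_natCast_nonneg _
  rw [sum_range_log_mul_add_one hk.ne'] at shift
  rw [logExcess, sum_Ioc_filter_modEq _ ha hak]
  linarith

end ResidueClass

/-- The analogue of Chebyshev's combination `T N - T (N / 2) - T (N / 3) - ...` for primes that are
`3` modulo `4`. The first three terms alone would leave weight `1` on `N / d = 17`, and their main
term is too small for the resulting error `ψ (N / 17)`; the last term moves the first such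
`N / d > 1` to `73`. -/
noncomputable def chebyshevCombination (N : ℕ) : ℝ :=
  logExcess 4 3 N - logExcess 4 3 (N / 2) - logExcess 4 1 (N / 3) - logExcess 4 3 (N / 17)

-- The coefficient `11 / 408` is `(1 - 1 / 2 - 1 / 3 - 1 / 17) / 4`.
theorem le_chebyshevCombination (N : ℕ) :
    log 4 * (11 / 408 * N - 3 / 4) - 4 * log N ≤ chebyshevCombination N := by
  have lower := le_logExcess (k := 4) (a := 3) (by norm_num) (by norm_num) N
  have upper_div_2 := logExcess_le (k := 4) (a := 3) (by norm_num) (by norm_num) (N / 2)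
  have upper_div_3 := logExcess_le (k := 4) (a := 1) (by norm_num) (by norm_num) (N / 3)
  have upper_div_17 := logExcess_le (k := 4) (a := 3) (by norm_num) (by norm_num) (N / 17)
  have main_term : 11 / 408 * (N : ℝ) - 3 / 4 ≤
      (N / 4 : ℕ) - (N / 2 / 4 : ℕ) - (N / 3 / 4 : ℕ) - (N / 17 / 4 : ℕ) := by
    have : 11 * N + 408 * (N / 2 / 4 + N / 3 / 4 + N / 17 / 4) ≤ 408 * (N / 4) + 306 := by omega
    have := (Nat.cast_le (α := ℝ)).mpr this
    push_cast [-Nat.cast_div_charZero] at this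
    linarith
  have main_term_mul_log :=
    mul_le_mul_of_nonneg_left main_term (log_nonneg (x := 4) (by norm_num))
  rw [chebyshevCombination]
  push_cast [-Nat.cast_div_charZero] at lower upper_div_2 upper_div_3 upper_div_17
  linarith [log_natCast_div_le N 2, log_natCast_div_le N 3, log_natCast_div_le N 17]

/-- The coefficient of `Λ d` in `chebyshevCombination N`, as a function of `q = N / d`. -/
def combinationWeight (d q : ℕ) : ℤ :=
  excessWeight 4 3 d q - excessWeight 4 3 d (q / 2) - excessWeight 4 1 d (q / 3)
    - excessWeight 4 3 d (q / 17)

theorem combinationWeight_nonpos_of_even {d : ℕ} (hd : Even d) (q : ℕ) :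
    combinationWeight d q ≤ 0 := by
  have gcd_not_dvd {a : ℕ} (ha : ¬ 2 ∣ a) : ¬ d.gcd 4 ∣ a := fun h ↦
    ha ((Nat.dvd_gcd hd.two_dvd (by norm_num)).trans h)
  simp only [combinationWeight, excessWeight_of_gcd_not_dvd (gcd_not_dvd (a := 1) (by norm_num)),
    excessWeight_of_gcd_not_dvd (gcd_not_dvd (a := 3) (by norm_num))]
  omega

theorem combinationWeight_nonpos_of_modEq_one {d : ℕ} (hd : d ≡ 1 [MOD 4]) (q : ℕ) :
    combinationWeight d q ≤ 0 := by
  have coprime : d.Coprime 4 := hd.gcd_eq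
  simp only [combinationWeight,
    excessWeight_of_coprime one_pos (by norm_num) coprime (hd.mul_right 1),
    excessWeight_of_coprime three_pos (by norm_num) coprime (hd.mul_right 3)]
  split_ifs <;> omega

theorem combinationWeight_le_of_modEq_three {d : ℕ} (hd : d ≡ 3 [MOD 4]) (q : ℕ) :
    combinationWeight d q ≤ if q = 1 ∨ 73 ≤ q then 1 else 0 := by
  have coprime : d.Coprime 4 := hd.gcd_eq
  have covered : 1 ≤ q % 4 →
      1 ≤ q / 2 % 4 ∨ 3 ≤ q / 3 % 4 ∨ 1 ≤ q / 17 % 4 ∨ q = 1 ∨ 73 ≤ q := by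
    by_contra! h
    have : q < 73 := h.2.2.2.2.2
    interval_cases q <;> omega
  simp only [combinationWeight,
    excessWeight_of_coprime (a := 3) one_pos (by norm_num) coprime (hd.mul_right 1),
    excessWeight_of_coprime (a := 1) three_pos (by norm_num) coprime (hd.mul_right 3)]
  split_ifs <;> omega

theorem combinationWeight_le (d q : ℕ) :
    combinationWeight d q ≤ if d % 4 = 3 ∧ (q = 1 ∨ 73 ≤ q) then 1 else 0 := by
  have indicator_nonneg : (0 : ℤ) ≤ if d % 4 = 3 ∧ (q = 1 ∨ 73 ≤ q) then 1 else 0 := by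
    split_ifs <;> norm_num
  obtain hd | hd | hd : Even d ∨ d % 4 = 1 ∨ d % 4 = 3 := by grind
  · exact (combinationWeight_nonpos_of_even hd q).trans indicator_nonneg
  · exact (combinationWeight_nonpos_of_modEq_one hd q).trans indicator_nonneg
  · simpa only [hd, true_and] using combinationWeight_le_of_modEq_three hd q

theorem chebyshevCombination_eq_sum_vonMangoldt (N : ℕ) :
    chebyshevCombination N = ∑ d ∈ Ioc 0 N, Λ d * combinationWeight d (N / d) := by
  have expand (a k : ℕ) : logExcess 4 a (N / k) =
      ∑ d ∈ Ioc 0 N, Λ d * excessWeight 4 a d (N / d / k) := by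
    simp only [logExcess_eq_sum_vonMangoldt 4 a (Nat.div_le_self N k), Nat.div_right_comm N k]
  rw [chebyshevCombination, logExcess_eq_sum_vonMangoldt 4 3 le_rfl, expand, expand, expand]
  simp only [← sum_sub_distrib, ← mul_sub, combinationWeight, Int.cast_sub]

theorem chebyshevCombination_le_sum_vonMangoldt (N : ℕ) :
    chebyshevCombination N ≤ ∑ d ∈ Ioc 0 N with d % 4 = 3 ∧ (N / d = 1 ∨ 73 ≤ N / d), Λ d := by
  rw [chebyshevCombination_eq_sum_vonMangoldt, sum_filter]
  refine sum_le_sum fun d _ ↦ ?_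
  rw [← mul_boole]
  exact mul_le_mul_of_nonneg_left (mod_cast combinationWeight_le d (N / d))
    ArithmeticFunction.vonMangoldt_nonneg

theorem sum_union_le {ι R : Type*} [DecidableEq ι] [AddCommMonoid R] [PartialOrder R]
    [IsOrderedAddMonoid R] {f : ι → R} (hf : ∀ i, 0 ≤ f i) (s t : Finset ι) :
    ∑ i ∈ s ∪ t, f i ≤ ∑ i ∈ s, f i + ∑ i ∈ t, f i := by
  rw [← sum_union_inter]
  exact le_add_of_nonneg_right (sum_nonneg fun i _ ↦ hf i)

theorem chebyshevCombination_le (N : ℕ) :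
    chebyshevCombination N ≤
      ∑ p ∈ Ioc (N / 2) N with p.Prime ∧ p % 4 = 3, log p + (ψ N - θ N) + ψ (N / 73) := by
  have cover : {d ∈ Ioc 0 N | d % 4 = 3 ∧ (N / d = 1 ∨ 73 ≤ N / d)} ⊆
      {p ∈ Ioc (N / 2) N | p.Prime ∧ p % 4 = 3} ∪ {d ∈ Ioc 0 N | ¬ d.Prime} ∪ Ioc 0 (N / 73) := by
    intro d hd
    simp only [mem_filter, mem_union, mem_Ioc] at hd ⊢
    obtain ⟨⟨hd0, hdN⟩, hd3, hq | hq⟩ := hd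
    · have : N / 2 < d := by
        rw [Nat.div_lt_iff_lt_mul two_pos, mul_comm]
        exact (Nat.div_lt_iff_lt_mul hd0).mp (by omega)
      by_cases hp : d.Prime
      · exact .inl (.inl ⟨⟨this, hdN⟩, hp, hd3⟩)
      · exact .inl (.inr ⟨⟨hd0, hdN⟩, hp⟩)
    · rw [Nat.le_div_iff_mul_le hd0] at hq
      exact .inr ⟨hd0, (Nat.le_div_iff_mul_le (by norm_num)).mpr (by rwa [mul_comm])⟩
  have prime_term : ∑ p ∈ Ioc (N / 2) N with p.Prime ∧ p % 4 = 3, Λ p =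
      ∑ p ∈ Ioc (N / 2) N with p.Prime ∧ p % 4 = 3, log p :=
    sum_congr rfl fun p hp ↦ ArithmeticFunction.vonMangoldt_apply_prime (mem_filter.mp hp).2.1
  have hΛ (d : ℕ) : 0 ≤ Λ d := ArithmeticFunction.vonMangoldt_nonneg
  rw [Chebyshev.psi_sub_theta_eq_sum_not_prime, Chebyshev.psi, Nat.floor_div_ofNat,
    Nat.floor_natCast, ← prime_term]
  calc chebyshevCombination N ≤ _ := chebyshevCombination_le_sum_vonMangoldt N
    _ ≤ _ := sum_le_sum_of_subset_of_nonneg cover fun d _ _ ↦ hΛ d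
    _ ≤ _ := sum_union_le hΛ _ _
    _ ≤ _ := add_le_add_left (sum_union_le hΛ _ _) _

theorem sqrt_mul_log_add_log_lt_mul_sub {y : ℝ} (hy : 4000000 ≤ y) :
    (9 / 4 * √y + 4) * log y < log 4 * ((11 / 408 - 1 / 73) * y - 3 / 4) := by
  obtain ⟨s, rfl, hs⟩ : ∃ s, y = s ^ 2 ∧ 2000 ≤ s :=
    ⟨√y, (sq_sqrt (by linarith)).symm, le_sqrt_of_sq_le (by linarith)⟩
  -- The tangent line of `log` at `2 ^ 12`.
  have log_le : log s ≤ s / 4096 + 7.318 := by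
    have h := log_le_sub_one_of_pos (show 0 < s / 2 ^ 12 by positivity)
    rw [log_div (by positivity) (by positivity), log_pow] at h
    push_cast at h
    linarith [log_two_lt_d9]
  have log_four : 1.386 ≤ log 4 := by
    rw [show (4 : ℝ) = 2 ^ 2 by norm_num, log_pow]
    push_cast
    linarith [log_two_gt_d9]
  rw [sqrt_sq (by linarith), log_pow]
  push_cast
  calc (9 / 4 * s + 4) * (2 * log s) ≤ (9 / 4 * s + 4) * (2 * (s / 4096 + 7.318)) := by gcongr
    _ < 1.386 * ((11 / 408 - 1 / 73) * s ^ 2 - 3 / 4) := by nlinarith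
    _ ≤ log 4 * ((11 / 408 - 1 / 73) * s ^ 2 - 3 / 4) :=
      mul_le_mul_of_nonneg_right log_four (by nlinarith)

theorem psi_sub_theta_add_psi_div_le {y : ℝ} (hy : 73 ≤ y) :
    ψ y - θ y + ψ (y / 73) ≤ log 4 * y / 73 + 9 / 4 * √y * log y := by
  have sqrt_le : √(y / 73) ≤ √y / 8 := by
    rw [sqrt_le_left (by positivity), div_pow, sq_sqrt (by linarith)]
    linarith
  have log_le : log (y / 73) ≤ log y := log_le_log (by linarith) (by linarith)
  have log_div_nonneg : 0 ≤ log (y / 73) := log_nonneg (by linarith)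
  have product_le : √(y / 73) * log (y / 73) ≤ √y / 8 * log y := by gcongr
  linarith [Chebyshev.psi_sub_theta_le (x := y) (by linarith),
    Chebyshev.psi_le (x := y / 73) (by linarith)]

theorem exists_prime_mod_four_eq_three_of_large {n : ℕ} (hn : 2000000 ≤ n) :
    ∃ p : ℕ, p.Prime ∧ p % 4 = 3 ∧ n < p ∧ p ≤ 2 * n := by
  have large : (4000000 : ℝ) ≤ (2 * n : ℕ) := by
    norm_cast
    omega
  have sum_log_pos : 0 < ∑ p ∈ Ioc (2 * n / 2) (2 * n) with p.Prime ∧ p % 4 = 3, log p := by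
    linarith [le_chebyshevCombination (2 * n), chebyshevCombination_le (2 * n),
      sqrt_mul_log_add_log_lt_mul_sub large,
      psi_sub_theta_add_psi_div_le (y := (2 * n : ℕ)) (by linarith)]
  obtain ⟨p, hp⟩ := nonempty_of_sum_ne_zero sum_log_pos.ne'
  simp only [mem_filter, mem_Ioc, Nat.mul_div_cancel_left n two_pos] at hp
  exact ⟨p, hp.2.1, hp.2.2, hp.1⟩

theorem exists_mem_lt_and_le_of_isChain {α : Type*} [LinearOrder α] {f : α → α} (hf : Monotone f)
    {a x : α} {l : List α} (hl : (a :: l).IsChain fun b c ↦ c ≤ f b) (hax : a ≤ x)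
    (hx : ∃ b ∈ l, x < b) : ∃ b ∈ l, x < b ∧ b ≤ f x := by
  induction l generalizing a with
  | nil => simp at hx
  | cons b l ih =>
    rw [List.isChain_cons_cons] at hl
    rcases lt_or_ge x b with hxb | hbx
    · exact ⟨b, List.mem_cons_self, hxb, hl.1.trans (hf hax)⟩
    · have later : ∃ c ∈ l, x < c := by simpa [hbx.not_gt] using hx
      obtain ⟨c, hc, h⟩ := ih hl.2 hbx later
      exact ⟨c, List.mem_cons_of_mem b hc, h⟩

/-- Primes that are `3` modulo `4`, each the largest such prime below twice its predecessor
(starting from `7`), covering the range not reached by the asymptotic argument. -/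
def doublingPrimes : List ℕ :=
  [11, 19, 31, 59, 107, 211, 419, 827, 1627, 3251, 6491, 12979, 25951, 51899, 103787, 207563,
    415111, 830191, 1660367, 3320699]

theorem isChain_doublingPrimes : (7 :: doublingPrimes).IsChain fun m n ↦ n ≤ 2 * m := by
  decide

theorem prime_and_mod_four_eq_three_of_mem_doublingPrimes :
    ∀ p ∈ doublingPrimes, p.Prime ∧ p % 4 = 3 := by
  simp only [doublingPrimes, List.forall_mem_cons]
  norm_num

theorem exists_prime_mod_four_eq_three_lt_and_le_two_mul {n : ℕ} (hn : 7 ≤ n) :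
    ∃ p : ℕ, p.Prime ∧ p % 4 = 3 ∧ n < p ∧ p ≤ 2 * n := by
  rcases lt_or_ge n 3320699 with small | large
  · obtain ⟨p, hp, hnp, hpn⟩ := exists_mem_lt_and_le_of_isChain (f := (2 * ·))
      (fun _ _ ↦ Nat.mul_le_mul_left 2) isChain_doublingPrimes hn
      ⟨3320699, by simp [doublingPrimes], small⟩
    obtain ⟨prime, mod_four⟩ := prime_and_mod_four_eq_three_of_mem_doublingPrimes p hp
    exact ⟨p, prime, mod_four, hnp, hpn⟩
  · exact exists_prime_mod_four_eq_three_of_large (by omega)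

/-- **Lemma 1 (second half).**
For every real `x ≥ 7`, the half-open interval `(x, 2x]` contains a prime number
congruent to `3` modulo `4`. -/
theorem stmt3 (x : ℝ) (hx : 7 ≤ x) :
    ∃ p : ℕ, p.Prime ∧ p % 4 = 3 ∧ x < p ∧ (p : ℝ) ≤ 2 * x := by
  obtain ⟨p, prime, mod_four, floor_lt, le_floor⟩ :=
    exists_prime_mod_four_eq_three_lt_and_le_two_mul (n := ⌊x⌋₊) (Nat.le_floor (mod_cast hx))
  have hp : (p : ℝ) ≤ 2 * ⌊x⌋₊ := mod_cast le_floor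
  exact ⟨p, prime, mod_four, Nat.lt_of_floor_lt floor_lt,
    hp.trans (by linarith [Nat.floor_le (show 0 ≤ x by linarith)])⟩
end

section
/- For every n ≥ 10, one has S_{4,1}(n) − q_{4,1}(n+1) ≥ 244, where q_{4,1}(1) < q_{4,1}(2) < ⋯ is the increasing enumeration of all primes congruent to 1 modulo 4 and S_{4,1}(n) = q_{4,1}(1) + ⋯ + q_{4,1}(n). -/
/-- `q41 k` is the `(k+1)`-st prime congruent to `1` modulo `4`, i.e. the increasing
enumeration `q41 0 = 5, q41 1 = 13, …` of the set `𝒫(4,1)` of primes `≡ 1 (mod 4)`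
(this set is infinite by Dirichlet's theorem, so `Nat.nth` is its enumeration). -/
noncomputable def q41 : ℕ → ℕ := Nat.nth (fun p => p.Prime ∧ p % 4 = 1)

/-- `S41 n` is the sum of the first `n` primes congruent to `1` modulo `4`. -/
noncomputable def S41 (n : ℕ) : ℕ := ∑ i ∈ Finset.range n, q41 i

/-!
Let `T y` be the sum of the primes `p ≡ 1 (mod 4)` below `y`. Since `S41 n = T (q41 n)` and
`97 ≤ q41 n` for `10 ≤ n`, it is enough that `y + 244 ≤ T y` for all `97 ≤ y`.

If this holds up to a prime `p ≡ 1 (mod 4)`, then it holds up to `2 * p`, because `p` itself enters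
the sum. Primes `p ≡ 1 (mod 4)`, each at most twice its predecessor, therefore carry the inequality
up to `2 ^ 42`; if they have the form `k * 2 ^ (m + 1) + 1`, their primality is cheap to certify.

Beyond `2 ^ 42` explicit forms of Mertens' theorem, for `Λ` and for `χ₄ Λ`, bound
`∑ (1 + χ₄ n) Λ n / n` over `N ^ (2 / 3) < n ≤ N` from below by `log N / 3 - 7.8`. There the proper
prime powers are negligible, and a prime `p ≡ 1 (mod 4)` contributes `2 log p / p`, at most
`2 log N / N ^ (4 / 3)` times `p`; so `T (N + 1) < 2 * N` would make the sum too small.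
-/

open Finset Real
open scoped ArithmeticFunction Chebyshev

/-- The sum of the natural numbers `n < y` with `P n`; the bound `y` itself is excluded. -/
def sumBelow (P : ℕ → Prop) [DecidablePred P] (y : ℕ) : ℕ :=
  ∑ n ∈ range y with P n, n

section sumBelow

variable {P : ℕ → Prop} [DecidablePred P]

theorem sumBelow_mono : Monotone (sumBelow P) := fun _ _ hab ↦
  sum_le_sum_of_subset (filter_subset_filter _ (range_subset_range.mpr hab))

theorem sumBelow_add_one {p : ℕ} (hp : P p) : sumBelow P (p + 1) = sumBelow P p + p := by
  rw [sumBelow, range_add_one, filter_insert, if_pos hp, sum_insert (by simp), add_comm, sumBelow]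

theorem add_le_sumBelow_of_le_two_mul {a c p : ℕ} (hp : P p) (hap : a ≤ p)
    (h : ∀ y, a ≤ y → y ≤ p → y + c ≤ sumBelow P y) :
    ∀ y, a ≤ y → y ≤ 2 * p → y + c ≤ sumBelow P y := by
  intro y hay hyp
  rcases le_or_gt y p with hy | hy
  · exact h y hay hy
  · have := h p hap le_rfl
    have := sumBelow_add_one hp
    have := sumBelow_mono (P := P) (Nat.add_one_le_iff.mpr hy)
    omega

theorem add_le_sumBelow_of_isChain {a c p : ℕ} {l : List ℕ}
    (hl : (p :: l).IsChain fun q r ↦ r ≤ 2 * q) (hP : ∀ q ∈ p :: l, P q ∧ a ≤ q)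
    (h : ∀ y, a ≤ y → y ≤ p → y + c ≤ sumBelow P y) :
    ∀ y, a ≤ y → y ≤ 2 * (p :: l).getLast (by simp) → y + c ≤ sumBelow P y := by
  induction l generalizing p with
  | nil => simpa using add_le_sumBelow_of_le_two_mul (hP p (by simp)).1 (hP p (by simp)).2 h
  | cons q l ih =>
    rw [List.isChain_cons_cons] at hl
    rw [List.forall_mem_cons] at hP
    have hq : ∀ y, a ≤ y → y ≤ q → y + c ≤ sumBelow P y := fun y hay hyq ↦
      add_le_sumBelow_of_le_two_mul hP.1.1 hP.1.2 h y hay (hyq.trans hl.1)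
    simpa only [List.getLast_cons_cons] using ih hl.2 hP.2 hq

theorem sumBelow_nth (hP : (Set.ofPred P).Infinite) (n : ℕ) :
    sumBelow P (Nat.nth P n) = ∑ i ∈ range n, Nat.nth P i := by
  induction n with
  | zero =>
    have : #{x ∈ range (Nat.nth P 0) | P x} = 0 := by
      rw [← Nat.count_eq_card_filter_range, Nat.count_nth_zero]
    rw [sumBelow, card_eq_zero.mp this, range_zero, sum_empty, sum_empty]
  | succ n ih =>
    rw [sumBelow, Nat.filter_range_nth_eq_insert_of_infinite hP, sum_insert (by simp),
      ← sumBelow, ih, sum_range_succ, add_comm]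

end sumBelow

/-! ### Proth primes and the range up to `2 ^ 42` -/

/-- The primes congruent to `1` modulo `4`; `q41` unfolds to `Nat.nth IsPrimeOneModFour`. -/
abbrev IsPrimeOneModFour (p : ℕ) : Prop := p.Prime ∧ p % 4 = 1

theorem infinite_isPrimeOneModFour : (Set.ofPred IsPrimeOneModFour).Infinite := by
  refine (Nat.infinite_setOfPred_prime_and_eq_mod (q := 4) (a := 1) isUnit_one).mono ?_
  rintro p ⟨hp, hp_mod⟩
  refine ⟨hp, (ZMod.natCast_eq_natCast_iff' p 1 4).mp ?_⟩
  rw [hp_mod, Nat.cast_one]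

theorem count_isPrimeOneModFour_97 : Nat.count IsPrimeOneModFour 97 = 10 := by decide +kernel

theorem sumBelow_isPrimeOneModFour_97 : sumBelow IsPrimeOneModFour 97 = 418 := by
  decide +kernel

theorem sumBelow_isPrimeOneModFour_114 : sumBelow IsPrimeOneModFour 114 = 838 := by
  decide +kernel

/- Proth's theorem: every prime factor `p` of `n` has `2 ^ (m + 1) ∣ p - 1`, as this is the order of
`a ^ k` modulo `p`, and therefore `n < p ^ 2`. -/
theorem prime_of_pow_eq_neg_one {n k m : ℕ} (hn : n = k * 2 ^ (m + 1) + 1) (hk : 0 < k)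
    (hkm : k < 2 ^ (m + 1)) {a : ZMod n} (ha : a ^ (k * 2 ^ m) = -1) : n.Prime := by
  have hn_one : n ≠ 1 := by simp [hn, hk.ne']
  by_contra hn_prime
  have : Fact n.minFac.Prime := ⟨Nat.minFac_prime hn_one⟩
  have : Fact (2 < n.minFac) := ⟨by
    refine lt_of_le_of_ne (Nat.minFac_prime hn_one).two_le fun h ↦ ?_
    have : 2 ∣ n := h ▸ n.minFac_dvd
    have : 2 ∣ k * 2 ^ (m + 1) := ⟨k * 2 ^ m, by ring⟩
    omega⟩
  let b : ZMod n.minFac := ZMod.castHom n.minFac_dvd (ZMod n.minFac) a ^ k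
  have hb : b ^ 2 ^ m = -1 := by
    rw [← pow_mul, ← map_pow, ha, map_neg, map_one]
  have hb_order : orderOf b = 2 ^ (m + 1) :=
    orderOf_eq_prime_pow (hb ▸ ZMod.neg_one_ne_one) (by rw [pow_succ, pow_mul, hb, neg_one_sq])
  have hb_ne : b ≠ 0 := fun h ↦ by simp [h] at hb
  have h_le : 2 ^ (m + 1) ≤ n.minFac - 1 :=
    hb_order ▸ Nat.le_of_dvd (by have := (Nat.minFac_prime hn_one).two_le; omega)
      (ZMod.orderOf_dvd_card_sub_one hb_ne)
  have h_sq : n.minFac ^ 2 ≤ n := Nat.minFac_sq_le_self (by omega) hn_prime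
  have : k * 2 ^ (m + 1) < 2 ^ (m + 1) * 2 ^ (m + 1) := by gcongr
  nlinarith [Nat.sub_add_cancel (Nat.minFac_prime hn_one).one_le]

/-- The pairs `(k, m)` encoding the prime certificates `k * 2 ^ (m + 1) + 1`; in each case `3` is a
quadratic nonresidue, so that it serves as the witness in Proth's theorem. -/
def prothPairs : List (ℕ × ℕ) :=
  [(1, 7), (7, 5), (5, 6), (19, 5), (25, 5), (49, 5), (35, 6), (31, 7), (119, 6), (25, 9), (49, 9),
    (85, 9), (329, 8), (161, 10), (643, 9), (641, 10), (157, 13), (1255, 11), (1229, 12),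
    (307, 15), (4901, 12), (611, 16), (9757, 13), (9749, 14), (9745, 15), (9719, 16), (19391, 16),
    (9695, 18), (77555, 16), (9689, 20), (155005, 17), (19375, 21), (309959, 18), (309907, 19),
    (619807, 19), (619775, 20), (1239533, 20)]

/-- The primes encoded by `prothPairs`: they start at `257`, each is at most twice its predecessor,
and the last one exceeds `2 ^ 41`. -/
def prothPrimes : List ℕ := prothPairs.map fun x ↦ x.1 * 2 ^ (x.2 + 1) + 1

theorem isPrimeOneModFour_of_mem_prothPrimes : ∀ p ∈ prothPrimes, IsPrimeOneModFour p := by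
  have h_size : ∀ x ∈ prothPairs, 0 < x.1 ∧ x.1 < 2 ^ (x.2 + 1) ∧ 0 < x.2 := by decide
  have h_pow : ∀ x ∈ prothPairs, (3 : ZMod (x.1 * 2 ^ (x.2 + 1) + 1)) ^ (x.1 * 2 ^ x.2) = -1 := by
    simp only [prothPairs, List.forall_mem_cons]
    norm_num only
    reduce_mod_char
    simp
  refine List.forall_mem_map.mpr fun x hx ↦ ?_
  obtain ⟨hk, hkm, hm⟩ := h_size x hx
  refine ⟨prime_of_pow_eq_neg_one rfl hk hkm (h_pow x hx), ?_⟩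
  obtain ⟨j, hj⟩ := Nat.exists_eq_add_of_lt hm
  rw [hj, show x.1 * 2 ^ (0 + j + 1 + 1) = 4 * (x.1 * 2 ^ j) by ring]
  omega

theorem add_le_sumBelow_isPrimeOneModFour_of_le_257 {y : ℕ} (hy : 97 ≤ y) (hy' : y ≤ 257) :
    y + 244 ≤ sumBelow IsPrimeOneModFour y := by
  rcases le_total y 114 with h | h
  · have := sumBelow_mono (P := IsPrimeOneModFour) hy
    have := sumBelow_isPrimeOneModFour_97
    omega
  · have := sumBelow_mono (P := IsPrimeOneModFour) h
    have := sumBelow_isPrimeOneModFour_114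
    omega

theorem add_le_sumBelow_isPrimeOneModFour_of_le_two_pow {y : ℕ} (hy : 97 ≤ y) (hy' : y ≤ 2 ^ 42) :
    y + 244 ≤ sumBelow IsPrimeOneModFour y := by
  have h_chain : prothPrimes.IsChain fun q r ↦ r ≤ 2 * q := by decide
  have h_le : ∀ q ∈ prothPrimes, 97 ≤ q := by decide
  have h_mem : ∀ q ∈ prothPrimes, IsPrimeOneModFour q ∧ 97 ≤ q := fun q hq ↦
    ⟨isPrimeOneModFour_of_mem_prothPrimes q hq, h_le q hq⟩
  have h_last : 2 ^ 42 ≤ 2 * prothPrimes.getLast (by decide) := by decide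
  exact add_le_sumBelow_of_isChain h_chain h_mem
    (fun _ ↦ add_le_sumBelow_isPrimeOneModFour_of_le_257) y hy (hy'.trans h_last)

/-! ### Mertens' theorem -/

theorem natCast_div_lt_div_add_one (N m : ℕ) : (N : ℝ) / m < (N / m : ℕ) + 1 := by
  rw [← Nat.floor_div_eq_div (K := ℝ)]
  exact Nat.lt_floor_add_one _

theorem psi_natCast (N : ℕ) : ψ N = ∑ n ∈ Ioc 0 N, Λ n := by
  rw [Chebyshev.psi, Nat.floor_natCast]

theorem log_factorial_eq_sum_vonMangoldt (N : ℕ) :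
    log N.factorial = ∑ m ∈ Ioc 0 N, Λ m * (N / m : ℕ) := by
  rw [← ArithmeticFunction.sum_Ioc_mul_zeta_eq_sum, ArithmeticFunction.vonMangoldt_mul_zeta]
  induction N with
  | zero => simp
  | succ n ih =>
    rw [sum_Ioc_succ_top n.zero_le, ← ih, Nat.factorial_succ, Nat.cast_mul,
      log_mul (by positivity) (by positivity), ArithmeticFunction.log_apply, add_comm]

theorem log_sub_one_le_sum_vonMangoldt_div {N : ℕ} (hN : 0 < N) :
    log N - 1 ≤ ∑ m ∈ Ioc 0 N, Λ m / m := by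
  have h_stirling : N * (log N - 1) ≤ log N.factorial := by
    have := Stirling.le_log_factorial_stirling hN.ne'
    have : 0 ≤ log (2 * π) := log_nonneg (by linarith [pi_gt_three])
    linarith [log_natCast_nonneg N]
  have h_factorial : log N.factorial ≤ N * ∑ m ∈ Ioc 0 N, Λ m / m := by
    rw [log_factorial_eq_sum_vonMangoldt, mul_sum]
    refine sum_le_sum fun m _ ↦ ?_
    calc Λ m * (N / m : ℕ) ≤ Λ m * (N / m) :=
          mul_le_mul_of_nonneg_left Nat.cast_div_le ArithmeticFunction.vonMangoldt_nonneg
      _ = N * (Λ m / m) := by ring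
  exact le_of_mul_le_mul_left (h_stirling.trans h_factorial) (by positivity)

theorem sum_vonMangoldt_div_le_log_add {N : ℕ} (hN : 0 < N) :
    ∑ m ∈ Ioc 0 N, Λ m / m ≤ log N + ψ N / N := by
  have h_power : log N.factorial ≤ N * log N := by
    rw [← log_pow]
    exact log_le_log (by positivity) (mod_cast N.factorial_le_pow)
  have h_factorial : N * ∑ m ∈ Ioc 0 N, Λ m / m ≤ log N.factorial + ψ N := by
    rw [log_factorial_eq_sum_vonMangoldt, psi_natCast, mul_sum, ← sum_add_distrib]
    refine sum_le_sum fun m _ ↦ ?_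
    calc N * (Λ m / m) = Λ m * (N / m) := by ring
      _ ≤ Λ m * ((N / m : ℕ) + 1) :=
          mul_le_mul_of_nonneg_left (natCast_div_lt_div_add_one N m).le
            ArithmeticFunction.vonMangoldt_nonneg
      _ = Λ m * (N / m : ℕ) + Λ m := by ring
  have hN' : (0 : ℝ) < N := mod_cast hN
  rw [← sub_le_iff_le_add', le_div_iff₀ hN']
  linarith

theorem psi_le_of_two_pow_le {x : ℝ} (hx : 2 ^ 28 ≤ x) : ψ x ≤ 1.4 * x := by
  have hx_pos : 0 < x := by linarith
  have h_log_four : log 4 ≤ 1.387 := by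
    rw [show (4 : ℝ) = 2 ^ 2 by norm_num, log_pow]
    push_cast
    linarith [log_two_lt_d9]
  have h_log_div_sqrt : log x / √x ≤ 0.0065 := by
    have h_exp : rexp 2 ≤ 2 ^ 28 := by
      calc rexp 2 = rexp 1 ^ 2 := by rw [← exp_nat_mul]; norm_num
        _ ≤ 3 ^ 2 := by gcongr; exact exp_one_lt_three.le
        _ ≤ 2 ^ 28 := by norm_num
    refine (log_div_sqrt_antitoneOn h_exp (h_exp.trans hx) hx).trans ?_
    simp only [log_pow]
    rw [show (2 : ℝ) ^ 28 = (2 ^ 14) ^ 2 by norm_num, sqrt_sq (by positivity)]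
    norm_num
    linarith [log_two_lt_d9]
  have h_error : √x * log x ≤ 0.0065 * x := by
    calc √x * log x = log x / √x * x := by
          rw [div_mul_eq_mul_div, eq_div_iff (sqrt_pos.mpr hx_pos).ne', mul_right_comm,
            mul_self_sqrt hx_pos.le, mul_comm]
      _ ≤ 0.0065 * x := by gcongr
  calc ψ x ≤ log 4 * x + 2 * √x * log x := Chebyshev.psi_le (by linarith)
    _ ≤ 1.387 * x + 2 * (0.0065 * x) := by rw [mul_assoc 2]; gcongr
    _ = 1.4 * x := by ring

/-! ### Mertens' theorem for a real Dirichlet character -/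

theorem norm_sum_Ioc_smul_le {E : Type*} [NormedAddCommGroup E] [NormedSpace ℝ E] {c : ℕ → E}
    {f : ℕ → ℝ} {a b : ℕ} {M : ℝ} (hab : a ≤ b) (hf : AntitoneOn f (Set.Ioi a))
    (hf_nonneg : ∀ n, a < n → 0 ≤ f n) (hM : ∀ k, ‖∑ n ∈ Ioc a k, c n‖ ≤ M) :
    ‖∑ n ∈ Ioc a b, f n • c n‖ ≤ M * f (a + 1) := by
  have summation_by_parts :
      ‖∑ n ∈ Ioc a b, f n • c n - f (b + 1) • ∑ n ∈ Ioc a b, c n‖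
        ≤ M * (f (a + 1) - f (b + 1)) := by
    induction b, hab using Nat.le_induction with
    | base => simp
    | succ b hab ih =>
      have hf_step : 0 ≤ f (b + 1) - f (b + 1 + 1) :=
        sub_nonneg.mpr (hf (Set.mem_Ioi.mpr (by omega)) (Set.mem_Ioi.mpr (by omega)) (by omega))
      have h_split : ∑ n ∈ Ioc a (b + 1), f n • c n - f (b + 1 + 1) • ∑ n ∈ Ioc a (b + 1), c n
          = (∑ n ∈ Ioc a b, f n • c n - f (b + 1) • ∑ n ∈ Ioc a b, c n)
            + (f (b + 1) - f (b + 1 + 1)) • ∑ n ∈ Ioc a (b + 1), c n := by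
        rw [sum_Ioc_succ_top hab, sum_Ioc_succ_top hab]
        module
      rw [h_split]
      refine (norm_add_le _ _).trans ?_
      rw [norm_smul, Real.norm_of_nonneg hf_step]
      nlinarith [hM (b + 1)]
  have h_end : ‖f (b + 1) • ∑ n ∈ Ioc a b, c n‖ ≤ f (b + 1) * M := by
    rw [norm_smul, Real.norm_of_nonneg (hf_nonneg _ (by omega))]
    exact mul_le_mul_of_nonneg_left (hM b) (hf_nonneg _ (by omega))
  linarith [norm_le_norm_sub_add (∑ n ∈ Ioc a b, f n • c n) (f (b + 1) • ∑ n ∈ Ioc a b, c n)]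

/-- The partial sum `∑_{n ≤ N} χ(n) / n` of the series for `L(1, χ)`. -/
noncomputable def partialLOne {q : ℕ} (χ : DirichletCharacter ℝ q) (N : ℕ) : ℝ :=
  ∑ n ∈ Ioc 0 N, χ n / n

section DirichletCharacter

variable {q : ℕ} (χ : DirichletCharacter ℝ q)

theorem sum_char_mul_log_div (N : ℕ) :
    ∑ n ∈ Ioc 0 N, χ n * (log n / n)
      = ∑ m ∈ Ioc 0 N, χ m * (Λ m / m) * partialLOne χ (N / m) := by
  let f : ArithmeticFunction ℝ := ⟨fun n ↦ χ n * (Λ n / n), by simp⟩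
  let g : ArithmeticFunction ℝ := ⟨fun n ↦ χ n / n, by simp⟩
  have h_convolution (n : ℕ) : (f * g) n = χ n * (log n / n) := by
    rw [ArithmeticFunction.mul_apply, ← ArithmeticFunction.vonMangoldt_sum,
      ← Nat.sum_divisorsAntidiagonal (fun d _ ↦ Λ d), sum_div, mul_sum]
    refine sum_congr rfl fun ⟨d, e⟩ hde ↦ ?_
    rw [← (Nat.mem_divisorsAntidiagonal.mp hde).1]
    change χ d * (Λ d / d) * (χ e / e) = χ (d * e : ℕ) * (Λ d / (d * e : ℕ))
    rw [Nat.cast_mul, Nat.cast_mul, map_mul]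
    ring
  rw [← sum_congr rfl fun n _ ↦ h_convolution n]
  exact ArithmeticFunction.sum_Ioc_mul_eq_sum_sum f g N

variable {χ} {M : ℝ}

theorem abs_sum_Ioc_char_mul_le (hM : ∀ a b : ℕ, |∑ n ∈ Ioc a b, χ (n : ZMod q)| ≤ M)
    {f : ℕ → ℝ} {a b : ℕ} (hab : a ≤ b) (hf : AntitoneOn f (Set.Ioi a))
    (hf_nonneg : ∀ n, a < n → 0 ≤ f n) :
    |∑ n ∈ Ioc a b, χ n * f n| ≤ M * f (a + 1) := by
  simpa only [smul_eq_mul, mul_comm (f _), norm_eq_abs] using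
    norm_sum_Ioc_smul_le hab hf hf_nonneg (c := fun n ↦ χ n) (hM a)

theorem abs_partialLOne_sub_le (hM : ∀ a b : ℕ, |∑ n ∈ Ioc a b, χ (n : ZMod q)| ≤ M)
    {a b : ℕ} (hab : a ≤ b) :
    |partialLOne χ b - partialLOne χ a| ≤ M / (a + 1) := by
  have h_anti : AntitoneOn (fun n : ℕ ↦ (n : ℝ)⁻¹) (Set.Ioi a) := fun m hm n _ hmn ↦ by
    have : 0 < m := (Nat.zero_le a).trans_lt hm
    dsimp only
    gcongr
  rw [partialLOne, partialLOne, ← sum_Ioc_consecutive _ a.zero_le hab, add_sub_cancel_left]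
  simpa [div_eq_mul_inv] using abs_sum_Ioc_char_mul_le hM hab h_anti fun n _ ↦ by positivity

/- Replacing `partialLOne χ (N / m)` by `partialLOne χ N` in `sum_char_mul_log_div` costs at most
`M * m / N`, which against the weights `Λ m / m` sums to `M * ψ N / N`. -/
theorem abs_sum_char_mul_vonMangoldt_div_mul_le
    (hM : ∀ a b : ℕ, |∑ n ∈ Ioc a b, χ (n : ZMod q)| ≤ M) {N : ℕ} (hN : 0 < N) :
    |∑ m ∈ Ioc 0 N, χ m * (Λ m / m)| * |partialLOne χ N|
      ≤ |∑ n ∈ Ioc 0 N, χ n * (log n / n)| + M * (ψ N / N) := by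
  have hM_nonneg : 0 ≤ M := (abs_nonneg _).trans (hM 0 0)
  have h_term (m : ℕ) (hm : m ∈ Ioc 0 N) :
      |χ m * (Λ m / m) * (partialLOne χ N - partialLOne χ (N / m))| ≤ M * (Λ m / N) := by
    have hm_pos : 0 < m := (mem_Ioc.mp hm).1
    have hΛ : 0 ≤ Λ m / m := div_nonneg ArithmeticFunction.vonMangoldt_nonneg m.cast_nonneg
    have hχ : |χ m| ≤ 1 := χ.norm_le_one m
    have h_tail : |partialLOne χ N - partialLOne χ (N / m)| ≤ M / (N / m) :=
      (abs_partialLOne_sub_le hM (N.div_le_self m)).trans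
        (div_le_div_of_nonneg_left hM_nonneg (by positivity)
          (natCast_div_lt_div_add_one N m).le)
    rw [abs_mul, abs_mul, abs_of_nonneg hΛ]
    calc |χ m| * (Λ m / m) * |partialLOne χ N - partialLOne χ (N / m)|
        ≤ 1 * (Λ m / m) * (M / (N / m)) := by gcongr
      _ = M * (Λ m / N) := by field_simp
  have h_error : |∑ m ∈ Ioc 0 N, χ m * (Λ m / m) * (partialLOne χ N - partialLOne χ (N / m))|
      ≤ M * (ψ N / N) := by
    rw [psi_natCast, sum_div, mul_sum]
    exact (abs_sum_le_sum_abs _ _).trans (sum_le_sum h_term)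
  have h_split : (∑ m ∈ Ioc 0 N, χ m * (Λ m / m)) * partialLOne χ N
      = ∑ n ∈ Ioc 0 N, χ n * (log n / n)
        + ∑ m ∈ Ioc 0 N, χ m * (Λ m / m) * (partialLOne χ N - partialLOne χ (N / m)) := by
    rw [sum_char_mul_log_div, ← sum_add_distrib, sum_mul]
    exact sum_congr rfl fun m _ ↦ by ring
  rw [← abs_mul, h_split]
  exact (abs_add_le _ _).trans (by gcongr)

end DirichletCharacter

/-! ### The character modulo `4` -/

/-- The nontrivial Dirichlet character modulo `4`, with real rather than integer values. -/
noncomputable def realχ₄ : DirichletCharacter ℝ 4 := ZMod.χ₄.ringHomComp (Int.castRingHom ℝ)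

theorem realχ₄_natCast (n : ℕ) :
    realχ₄ n = if n % 2 = 0 then 0 else if n % 4 = 1 then 1 else -1 := by
  rw [realχ₄, MulChar.ringHomComp_apply, ZMod.χ₄_nat_eq_if_mod_four]
  split_ifs <;> simp

theorem sum_range_realχ₄ (n : ℕ) :
    ∑ k ∈ range n, realχ₄ k = if n % 4 = 2 ∨ n % 4 = 3 then 1 else 0 := by
  induction n with
  | zero => simp
  | succ n ih =>
    rw [sum_range_succ, ih, realχ₄_natCast]
    have : n % 4 = 0 ∨ n % 4 = 1 ∨ n % 4 = 2 ∨ n % 4 = 3 := by omega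
    rcases this with h | h | h | h <;>
      simp [h, Nat.add_mod, ← Nat.mod_mod_of_dvd n (by decide : 2 ∣ 4)]

theorem abs_sum_Ioc_realχ₄_le_one (a b : ℕ) : |∑ n ∈ Ioc a b, realχ₄ n| ≤ 1 := by
  rcases le_total a b with hab | hba
  · rw [← Ico_add_one_add_one_eq_Ioc, sum_Ico_eq_sub _ (by omega), sum_range_realχ₄,
      sum_range_realχ₄]
    split_ifs <;> norm_num
  · simp [Ioc_eq_empty_of_le hba]

theorem two_div_three_le_partialLOne_realχ₄ {N : ℕ} (hN : 2 ≤ N) :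
    2 / 3 ≤ partialLOne realχ₄ N := by
  have h_two : partialLOne realχ₄ 2 = 1 := by
    simp [partialLOne, sum_Ioc_succ_top, realχ₄_natCast]
  have h_tail := (abs_le.mp (abs_partialLOne_sub_le abs_sum_Ioc_realχ₄_le_one hN)).1
  norm_num [h_two] at h_tail
  linarith

theorem abs_sum_realχ₄_mul_log_div_le {N : ℕ} (hN : 2 ≤ N) :
    |∑ n ∈ Ioc 0 N, realχ₄ n * (log n / n)| ≤ 0.4 := by
  have h_anti : AntitoneOn (fun n : ℕ ↦ log n / n) (Set.Ioi 2) := fun m hm n hn hmn ↦ by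
    have h_exp (k : ℕ) (hk : k ∈ Set.Ioi 2) : rexp 1 ≤ k :=
      exp_one_lt_three.le.trans (mod_cast (Set.mem_Ioi.mp hk))
    exact log_div_self_antitoneOn (h_exp m hm) (h_exp n hn) (mod_cast hmn)
  have h_two : ∑ n ∈ Ioc (0 : ℕ) 2, realχ₄ n * (log n / n) = 0 := by
    simp [sum_Ioc_succ_top, realχ₄_natCast]
  rw [← sum_Ioc_consecutive _ (Nat.zero_le 2) hN, h_two, zero_add]
  calc _ ≤ 1 * (log (2 + 1 : ℕ) / (2 + 1 : ℕ)) :=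
        abs_sum_Ioc_char_mul_le abs_sum_Ioc_realχ₄_le_one hN h_anti fun n _ ↦ by positivity
    _ ≤ 0.4 := by
        norm_num
        linarith [log_three_lt_d9]

theorem abs_sum_realχ₄_mul_vonMangoldt_div_le {N : ℕ} (hN : 2 ^ 28 ≤ N) :
    |∑ m ∈ Ioc 0 N, realχ₄ m * (Λ m / m)| ≤ 2.7 := by
  have hψ : ψ N / N ≤ 1.4 := by
    have : (2 : ℝ) ^ 28 ≤ N := mod_cast hN
    exact (div_le_iff₀ (by linarith)).mpr (psi_le_of_two_pow_le this)
  have h_product := abs_sum_char_mul_vonMangoldt_div_mul_le abs_sum_Ioc_realχ₄_le_one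
    (N := N) (by omega)
  have h_log := abs_sum_realχ₄_mul_log_div_le (N := N) (by omega)
  have h_lower := (two_div_three_le_partialLOne_realχ₄ (N := N) (by omega)).trans (le_abs_self _)
  nlinarith [abs_nonneg (∑ m ∈ Ioc 0 N, realχ₄ m * (Λ m / m))]

/-! ### The range beyond `2 ^ 42` -/

theorem log_sub_log_le_sum_Ioc_one_add_realχ₄_mul {z N : ℕ} (hz : 2 ^ 28 ≤ z) (hzN : z ≤ N) :
    log N - log z - 7.8 ≤ ∑ n ∈ Ioc z N, (1 + realχ₄ n) * (Λ n / n) := by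
  have h_mertens_N := log_sub_one_le_sum_vonMangoldt_div (N := N) (by omega)
  have h_mertens_z : ∑ n ∈ Ioc 0 z, Λ n / n ≤ log z + 1.4 := by
    have hz' : (2 : ℝ) ^ 28 ≤ z := mod_cast hz
    have hψ : ψ z / z ≤ 1.4 := (div_le_iff₀ (by linarith)).mpr (psi_le_of_two_pow_le hz')
    linarith [sum_vonMangoldt_div_le_log_add (N := z) (by omega)]
  have h_char_N := (abs_le.mp (abs_sum_realχ₄_mul_vonMangoldt_div_le (hz.trans hzN))).1
  have h_char_z := (abs_le.mp (abs_sum_realχ₄_mul_vonMangoldt_div_le hz)).2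
  rw [← sum_Ioc_consecutive _ z.zero_le hzN] at h_mertens_N h_char_N
  simp only [add_mul, one_mul, sum_add_distrib]
  linarith

theorem one_add_realχ₄_mul_vonMangoldt_div_le {n : ℕ} (hn : 2 < n) :
    (1 + realχ₄ n) * (Λ n / n) ≤ 2 * (if IsPrimeOneModFour n then log n / n else 0)
      + 2 * (if ¬n.Prime then Λ n / n else 0) := by
  by_cases hn_prime : n.Prime
  · have hn_odd : n % 2 = 1 := hn_prime.eq_two_or_odd.resolve_left hn.ne'
    rw [ArithmeticFunction.vonMangoldt_apply_prime hn_prime, realχ₄_natCast]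
    by_cases hn_mod : n % 4 = 1
    · simp [IsPrimeOneModFour, hn_prime, hn_mod, hn_odd, one_add_one_eq_two]
    · simp [IsPrimeOneModFour, hn_prime, hn_mod, hn_odd]
  · have hΛ : 0 ≤ Λ n / n := div_nonneg ArithmeticFunction.vonMangoldt_nonneg n.cast_nonneg
    have hχ : realχ₄ n ≤ 1 := (le_abs_self _).trans (realχ₄.norm_le_one n)
    simp only [IsPrimeOneModFour, hn_prime, false_and, if_false, not_false_eq_true, if_true]
    nlinarith

theorem sum_Ioc_floor_log_div_le {P : ℕ → Prop} [DecidablePred P] {x : ℝ} (hx : 0 < x) (N : ℕ) :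
    ∑ n ∈ Ioc ⌊x⌋₊ N with P n, log n / n ≤ log N / x ^ 2 * sumBelow P (N + 1) := by
  have h_term (n : ℕ) (hn : n ∈ Ioc ⌊x⌋₊ N) : log n / n ≤ log N / x ^ 2 * n := by
    obtain ⟨hxn, hnN⟩ := mem_Ioc.mp hn
    have hxn : x < n := (Nat.floor_lt hx.le).mp hxn
    have hn_pos : (0 : ℝ) < n := hx.trans hxn
    calc log n / n = log n / n ^ 2 * n := by field_simp
      _ ≤ log N / x ^ 2 * n := by gcongr
  calc ∑ n ∈ Ioc ⌊x⌋₊ N with P n, log n / n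
      ≤ ∑ n ∈ Ioc ⌊x⌋₊ N with P n, log N / x ^ 2 * n :=
        sum_le_sum fun n hn ↦ h_term n (mem_of_mem_filter n hn)
    _ ≤ ∑ n ∈ range (N + 1) with P n, log N / x ^ 2 * n := by
        refine sum_le_sum_of_subset_of_nonneg (filter_subset_filter _ fun n hn ↦ ?_)
          fun n _ _ ↦ by positivity
        exact mem_range_succ_iff.mpr (mem_Ioc.mp hn).2
    _ = log N / x ^ 2 * sumBelow P (N + 1) := by rw [← mul_sum, sumBelow, Nat.cast_sum]

theorem sum_Ioc_floor_not_prime_vonMangoldt_div_le {x : ℝ} (hx : 0 < x) {N : ℕ} (hN : 0 < N) :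
    ∑ n ∈ Ioc ⌊x⌋₊ N with ¬n.Prime, Λ n / n ≤ 2 * √N * log N / x := by
  have h_psi_sub_theta : ∑ n ∈ Ioc 0 N with ¬n.Prime, Λ n ≤ 2 * √N * log N := by
    have := Chebyshev.psi_sub_theta_le (x := N) (mod_cast hN)
    rwa [Chebyshev.psi_sub_theta_eq_sum_not_prime, Nat.floor_natCast] at this
  calc ∑ n ∈ Ioc ⌊x⌋₊ N with ¬n.Prime, Λ n / n
      ≤ ∑ n ∈ Ioc ⌊x⌋₊ N with ¬n.Prime, Λ n / x := by
        refine sum_le_sum fun n hn ↦ ?_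
        have hxn : x < n := (Nat.floor_lt hx.le).mp (mem_Ioc.mp (mem_of_mem_filter n hn)).1
        exact div_le_div_of_nonneg_left ArithmeticFunction.vonMangoldt_nonneg hx hxn.le
    _ ≤ ∑ n ∈ Ioc 0 N with ¬n.Prime, Λ n / x :=
        sum_le_sum_of_subset_of_nonneg
          (filter_subset_filter _ (Ioc_subset_Ioc_left (Nat.zero_le _)))
          fun n _ _ ↦ div_nonneg ArithmeticFunction.vonMangoldt_nonneg hx.le
    _ ≤ 2 * √N * log N / x := by
        rw [← sum_div]
        gcongr

theorem sum_Ioc_floor_one_add_realχ₄_mul_le {x : ℝ} (hx : 2 ≤ x) {N : ℕ} (hN : 0 < N) :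
    ∑ n ∈ Ioc ⌊x⌋₊ N, (1 + realχ₄ n) * (Λ n / n)
      ≤ 2 * (log N / x ^ 2 * sumBelow IsPrimeOneModFour (N + 1))
        + 2 * (2 * √N * log N / x) := by
  have hx_pos : 0 < x := by linarith
  have h_term (n : ℕ) (hn : n ∈ Ioc ⌊x⌋₊ N) :=
    one_add_realχ₄_mul_vonMangoldt_div_le
      ((Nat.le_floor (mod_cast hx)).trans_lt (mem_Ioc.mp hn).1)
  refine (sum_le_sum h_term).trans ?_
  rw [sum_add_distrib, ← mul_sum, ← mul_sum, ← sum_filter, ← sum_filter]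
  gcongr
  · exact sum_Ioc_floor_log_div_le hx_pos N
  · exact sum_Ioc_floor_not_prime_vonMangoldt_div_le hx_pos hN

theorem log_div_self_le_of_two_pow_seven_le {u : ℝ} (hu : 2 ^ 7 ≤ u) : log u / u ≤ 0.04 := by
  have h_exp : rexp 1 ≤ 2 ^ 7 := by linarith [exp_one_lt_three]
  refine (log_div_self_antitoneOn h_exp (h_exp.trans hu) hu).trans ?_
  simp only [log_pow]
  norm_num
  linarith [log_two_lt_d9]

theorem two_log_sub_le_of_pow_six_eq {N : ℕ} {u : ℝ} (hu : 2 ^ 7 ≤ u) (huN : u ^ 6 = N) :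
    2 * log u - 7.8
      ≤ 12 * (log u / u) * (sumBelow IsPrimeOneModFour (N + 1) / (u * u ^ 6))
        + 24 * (log u / u) := by
  have hu_pos : 0 < u := by linarith
  have hN : 0 < N := by exact_mod_cast huN ▸ pow_pos hu_pos 6
  have hx : 2 ^ 28 ≤ u ^ 4 := by
    calc (2 : ℝ) ^ 28 = (2 ^ 7) ^ 4 := by norm_num
      _ ≤ u ^ 4 := by gcongr
  have h_floor_le : ⌊u ^ 4⌋₊ ≤ N :=
    Nat.floor_le_of_le (huN ▸ pow_le_pow_right₀ (by linarith) (by norm_num))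
  have h_log_N : log N = 6 * log u := by rw [← huN, log_pow, Nat.cast_ofNat]
  have h_sqrt_N : √N = u ^ 3 := by
    rw [← huN, show u ^ 6 = (u ^ 3) ^ 2 by ring, sqrt_sq (by positivity)]
  have h_floor : 2 ^ 28 ≤ ⌊u ^ 4⌋₊ := Nat.le_floor (mod_cast hx)
  have h_log_floor : log ⌊u ^ 4⌋₊ ≤ 4 * log u := by
    calc log ⌊u ^ 4⌋₊ ≤ log (u ^ 4) :=
          log_le_log (by norm_cast; omega) (Nat.floor_le (by positivity))
      _ = 4 * log u := by rw [log_pow, Nat.cast_ofNat]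
  have h_lower := log_sub_log_le_sum_Ioc_one_add_realχ₄_mul h_floor h_floor_le
  have h_upper := sum_Ioc_floor_one_add_realχ₄_mul_le (by linarith : 2 ≤ u ^ 4) hN
  rw [h_log_N] at h_lower h_upper
  rw [h_sqrt_N] at h_upper
  calc 2 * log u - 7.8 ≤ 6 * log u - log ⌊u ^ 4⌋₊ - 7.8 := by linarith
    _ ≤ _ := h_lower.trans h_upper
    _ = _ := by field_simp; ring

theorem two_mul_le_sumBelow_isPrimeOneModFour_of_two_pow_le {N : ℕ} (hN : 2 ^ 42 ≤ N) :
    2 * N ≤ sumBelow IsPrimeOneModFour (N + 1) := by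
  by_contra! h_lt
  have h_lt' : (sumBelow IsPrimeOneModFour (N + 1) : ℝ) < 2 * N := mod_cast h_lt
  let u : ℝ := (N : ℝ) ^ (6 : ℝ)⁻¹
  have huN : u ^ 6 = N := rpow_inv_natCast_pow N.cast_nonneg (by norm_num)
  have hu : 2 ^ 7 ≤ u := by
    refine le_of_pow_le_pow_left₀ (n := 6) (by norm_num) (by positivity) ?_
    rw [huN, ← pow_mul]
    exact_mod_cast hN
  have : 0 < u := by linarith
  have h_log : 4.85 ≤ log u := by
    have := log_le_log (by norm_num) hu
    rw [log_pow] at this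
    push_cast at this
    linarith [log_two_gt_d9]
  have h_ratio : sumBelow IsPrimeOneModFour (N + 1) / (u * u ^ 6) ≤ 2 / 2 ^ 7 := by
    calc sumBelow IsPrimeOneModFour (N + 1) / (u * u ^ 6) ≤ 2 * u ^ 6 / (u * u ^ 6) := by
          rw [huN]; gcongr
      _ = 2 / u := by field_simp
      _ ≤ 2 / 2 ^ 7 := by gcongr
  have h_log_div := log_div_self_le_of_two_pow_seven_le hu
  have h_log_div_nonneg : 0 ≤ log u / u := by positivity
  have h_window := two_log_sub_le_of_pow_six_eq hu huN
  nlinarith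

theorem add_le_sumBelow_isPrimeOneModFour_of_two_pow_lt {y : ℕ} (hy : 2 ^ 42 < y) :
    y + 244 ≤ sumBelow IsPrimeOneModFour y := by
  have := two_mul_le_sumBelow_isPrimeOneModFour_of_two_pow_le (N := y - 1) (by omega)
  rw [Nat.sub_add_cancel (by omega)] at this
  omega

theorem add_le_sumBelow_isPrimeOneModFour {y : ℕ} (hy : 97 ≤ y) :
    y + 244 ≤ sumBelow IsPrimeOneModFour y :=
  (le_or_gt y (2 ^ 42)).elim (add_le_sumBelow_isPrimeOneModFour_of_le_two_pow hy)
    add_le_sumBelow_isPrimeOneModFour_of_two_pow_lt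

theorem ninety_seven_le_q41 {n : ℕ} (hn : 10 ≤ n) : 97 ≤ q41 n := by
  refine (Nat.count_le_iff_le_nth infinite_isPrimeOneModFour).mp ?_
  rwa [count_isPrimeOneModFour_97]

/-- **Lemma 2 (a).**  If `n ≥ 10`, then `S_{4,1}(n) - q_{4,1}(n+1) ≥ 244`
(in `0`-indexed form `q_{4,1}(n+1) = q41 n`). -/
theorem stmt4 : ∀ n : ℕ, 10 ≤ n → (244 : ℤ) ≤ (S41 n : ℤ) - (q41 n : ℤ) := by
  intro n hn
  have h_bound : q41 n + 244 ≤ S41 n := by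
    calc q41 n + 244 ≤ sumBelow IsPrimeOneModFour (q41 n) :=
          add_le_sumBelow_isPrimeOneModFour (ninety_seven_le_q41 hn)
      _ = S41 n := sumBelow_nth infinite_isPrimeOneModFour n
  omega
end

section
/- For every n ≥ 8, one has S_{4,3}(n) − q_{4,3}(n+1) ≥ 112, where q_{4,3}(1) < q_{4,3}(2) < ⋯ is the increasing enumeration of all primes congruent to 3 modulo 4 and S_{4,3}(n) = q_{4,3}(1) + ⋯ + q_{4,3}(n). -/
/-- `q43 k` is the `(k+1)`-st prime congruent to `3` modulo `4`, i.e. the increasing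
enumeration `q43 0 = 3, q43 1 = 7, …` of the set `𝒫(4,3)` of primes `≡ 3 (mod 4)`
(this set is infinite by Dirichlet's theorem, so `Nat.nth` is its enumeration). -/
noncomputable def q43 : ℕ → ℕ := Nat.nth (fun p => p.Prime ∧ p % 4 = 3)

/-- `S43 n` is the sum of the first `n` primes congruent to `3` modulo `4`. -/
noncomputable def S43 (n : ℕ) : ℕ := ∑ i ∈ Finset.range n, q43 i

/-!
Write `q n = 4 * N + 3`. As the `q i` lie in one residue class mod `4`, `S n ≥ 2 * n ^ 2`, so it is
enough to bound from below the number `n` of primes `≡ 3 (mod 4)` up to `4 * N`. A prime `≡ 1`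
divides `∏ k < N, (4 * k + 3)` at most as often as `∏ k < N, (2 * k + 1)`, and a prime `p ≡ 3`
at most `log p (4 * N)` times more often. The quotient of the products is at least `2 ^ N`, whence
`2 ^ N ≤ (4 * N) ^ n`, and then `3 * N ≤ n ^ 2` once `N ≥ 512`, so `S n ≥ 6 * N`.

For the remaining `n`, if the bound holds at `q m = p`, it holds at every later `q n ≤ 2 * p`,
because `S n ≥ S m + p`. Starting from `q 8 = 59` (`0`-indexed), the primes
`59, 107, 211, 419, 827, 1627`, each less than twice its predecessor, cover all `q n ≤ 3254`.
-/

open Finset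

section CountDvd

variable {d a b v a' b' v' : ℕ}

lemma dvd_mul_add_iff_modEq (hda : d.Coprime a) (hv : d ∣ a * v + b) (k : ℕ) :
    d ∣ a * k + b ↔ k ≡ v [MOD d] := by
  have hv0 : a * v + b ≡ 0 [MOD d] := Nat.modEq_zero_iff_dvd.2 hv
  calc d ∣ a * k + b ↔ a * k + b ≡ 0 [MOD d] := Nat.modEq_zero_iff_dvd.symm
    _ ↔ a * k + b ≡ a * v + b [MOD d] := ⟨fun h => h.trans hv0.symm, fun h => h.trans hv0⟩
    _ ↔ k ≡ v [MOD d] :=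
      ⟨fun h => (h.add_right_cancel' b).cancel_left_of_coprime hda,
        fun h => (h.mul_left a).add_right b⟩

lemma count_dvd_mul_add (hd : 0 < d) (hda : d.Coprime a) (hv : d ∣ a * v + b) (N : ℕ) :
    N.count (fun k => d ∣ a * k + b) = N / d + if v % d < N % d then 1 else 0 := by
  simp only [dvd_mul_add_iff_modEq hda hv]
  exact Nat.count_modEq_card N hd v

lemma count_dvd_mul_add_le_of_le (hda : d.Coprime a) (hv : d ∣ a * v + b)
    (hda' : d.Coprime a') (hv' : d ∣ a' * v' + b') (hle : v' ≤ v) (hlt : v < d) (N : ℕ) :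
    N.count (fun k => d ∣ a * k + b) ≤ N.count (fun k => d ∣ a' * k + b') := by
  have hd : 0 < d := by omega
  rw [count_dvd_mul_add hd hda hv, count_dvd_mul_add hd hda' hv', Nat.mod_eq_of_lt hlt,
    Nat.mod_eq_of_lt (hle.trans_lt hlt)]
  split_ifs <;> omega

lemma count_dvd_mul_add_le_add_one (hd : 0 < d) (hda : d.Coprime a) (hv : d ∣ a * v + b)
    (hda' : d.Coprime a') (hv' : d ∣ a' * v' + b') (N : ℕ) :
    N.count (fun k => d ∣ a * k + b) ≤ N.count (fun k => d ∣ a' * k + b') + 1 := by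
  rw [count_dvd_mul_add hd hda hv, count_dvd_mul_add hd hda' hv']
  split_ifs <;> omega

end CountDvd

lemma count_dvd_four_mul_add_three_le {d : ℕ} (hd : d % 4 = 1) (N : ℕ) :
    N.count (fun k => d ∣ 4 * k + 3) ≤ N.count (fun k => d ∣ 2 * k + 1) := by
  obtain ⟨c, rfl⟩ : ∃ c, d = 4 * c + 1 := ⟨d / 4, by omega⟩
  have hodd : Odd (4 * c + 1) := ⟨2 * c, by ring⟩
  exact count_dvd_mul_add_le_of_le (v := 3 * c) (v' := 2 * c)
    (hodd.coprime_two_right.pow_right 2) ⟨3, by ring⟩ hodd.coprime_two_right ⟨1, by ring⟩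
    (by omega) (by omega) N

lemma count_dvd_four_mul_add_three_le_add_one {d : ℕ} (hd : Odd d) (N : ℕ) :
    N.count (fun k => d ∣ 4 * k + 3) ≤ N.count (fun k => d ∣ 2 * k + 1) + 1 := by
  rcases Nat.odd_mod_four_iff.1 (Nat.odd_iff.1 hd) with hd1 | hd3
  · exact (count_dvd_four_mul_add_three_le hd1 N).trans (Nat.le_succ _)
  · obtain ⟨c, rfl⟩ : ∃ c, d = 4 * c + 3 := ⟨d / 4, by omega⟩
    exact count_dvd_mul_add_le_add_one (v := c) (v' := 2 * c + 1) (by omega)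
      (hd.coprime_two_right.pow_right 2) ⟨1, by ring⟩ hd.coprime_two_right ⟨1, by ring⟩ N

lemma factorization_prod_range_eq_sum_count {p b N : ℕ} {f : ℕ → ℕ} (hp : p.Prime)
    (hpos : ∀ k < N, 0 < f k) (hlt : ∀ k < N, f k < p ^ b) :
    (∏ k ∈ range N, f k).factorization p =
      ∑ j ∈ Ico 1 b, N.count (fun k => p ^ j ∣ f k) := by
  calc (∏ k ∈ range N, f k).factorization p = ∑ k ∈ range N, (f k).factorization p :=
        Nat.factorization_prod_apply fun k hk => (hpos k (mem_range.1 hk)).ne'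
    _ = ∑ k ∈ range N, ∑ j ∈ Ico 1 b, if p ^ j ∣ f k then 1 else 0 :=
        sum_congr rfl fun k hk => by
          rw [Nat.factorization_eq_card_pow_dvd_of_lt hp (hpos k (mem_range.1 hk))
            (hlt k (mem_range.1 hk)), card_filter]
    _ = ∑ j ∈ Ico 1 b, N.count (fun k => p ^ j ∣ f k) := by
        rw [sum_comm]
        simp only [Nat.count_eq_card_filter_range, card_filter]

/-- The primes of the residue class `a` modulo `q`; the representative `a` is meant to be reduced,
so that `q43` enumerates `PrimeInClass 4 3`. -/
abbrev PrimeInClass (q a p : ℕ) : Prop := p.Prime ∧ p % q = a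

/-- The part of `lcm(1, …, x)` supported on the primes `p ≡ a (mod q)`: each of them up to `x`
contributes its largest power not exceeding `x`. Its size measures how many such primes there
are. -/
def primePowProd (q a x : ℕ) : ℕ := ∏ p ∈ range (x + 1) with PrimeInClass q a p, p ^ Nat.log p x

section PrimePowProd

variable {q a x p : ℕ}

lemma primePowProd_ne_zero (q a x : ℕ) : primePowProd q a x ≠ 0 :=
  prod_ne_zero_iff.2 fun _ hp => pow_ne_zero _ (mem_filter.1 hp).2.1.ne_zero

lemma primePowProd_le_pow_count (q a : ℕ) (hx : x ≠ 0) :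
    primePowProd q a x ≤ x ^ (x + 1).count (PrimeInClass q a) := by
  rw [Nat.count_eq_card_filter_range]
  exact prod_le_pow_card _ _ _ fun p _ => Nat.pow_log_le_self p hx

lemma log_le_factorization_primePowProd (hp : PrimeInClass q a p) (x : ℕ) :
    Nat.log p x ≤ (primePowProd q a x).factorization p := by
  rcases lt_or_ge x p with hxp | hpx
  · simp [Nat.log_of_lt hxp]
  · rw [← hp.1.pow_dvd_iff_le_factorization (primePowProd_ne_zero q a x)]
    exact dvd_prod_of_mem (fun p => p ^ Nat.log p x)
      (mem_filter.2 ⟨mem_range.2 (Nat.lt_succ_of_le hpx), hp⟩)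

end PrimePowProd

section Chebyshev

variable {p : ℕ}

lemma factorization_prod_four_mul_add_three (hp : p.Prime) (N : ℕ) :
    (∏ k ∈ range N, (4 * k + 3)).factorization p =
      ∑ j ∈ Ico 1 (Nat.log p (4 * N) + 1), N.count (fun k => p ^ j ∣ 4 * k + 3) :=
  factorization_prod_range_eq_sum_count hp (fun _ _ => by omega) fun k hk =>
    (by omega : 4 * k + 3 < 4 * N).trans (Nat.lt_pow_succ_log_self hp.one_lt _)

lemma factorization_prod_two_mul_add_one (hp : p.Prime) (N : ℕ) :
    (∏ k ∈ range N, (2 * k + 1)).factorization p =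
      ∑ j ∈ Ico 1 (Nat.log p (4 * N) + 1), N.count (fun k => p ^ j ∣ 2 * k + 1) :=
  factorization_prod_range_eq_sum_count hp (fun _ _ => by omega) fun k hk =>
    (by omega : 2 * k + 1 < 4 * N).trans (Nat.lt_pow_succ_log_self hp.one_lt _)

lemma factorization_two_prod_four_mul_add_three (N : ℕ) :
    (∏ k ∈ range N, (4 * k + 3)).factorization 2 = 0 := by
  refine Nat.factorization_eq_zero_of_not_dvd fun hdvd => ?_
  obtain ⟨k, -, hk⟩ := (Nat.prime_two.prime.dvd_finsetProd_iff _).1 hdvd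
  omega

lemma factorization_prod_le_of_mod_four_eq_one (hp : p.Prime) (hp1 : p % 4 = 1) (N : ℕ) :
    (∏ k ∈ range N, (4 * k + 3)).factorization p ≤
      (∏ k ∈ range N, (2 * k + 1)).factorization p := by
  rw [factorization_prod_four_mul_add_three hp, factorization_prod_two_mul_add_one hp]
  refine sum_le_sum fun j _ => count_dvd_four_mul_add_three_le ?_ N
  simp [Nat.pow_mod, hp1]

lemma factorization_prod_le_add_log (hp : p.Prime) (hodd : Odd p) (N : ℕ) :
    (∏ k ∈ range N, (4 * k + 3)).factorization p ≤
      (∏ k ∈ range N, (2 * k + 1)).factorization p + Nat.log p (4 * N) := by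
  rw [factorization_prod_four_mul_add_three hp, factorization_prod_two_mul_add_one hp]
  calc ∑ j ∈ Ico 1 (Nat.log p (4 * N) + 1), N.count (fun k => p ^ j ∣ 4 * k + 3)
      ≤ ∑ j ∈ Ico 1 (Nat.log p (4 * N) + 1), (N.count (fun k => p ^ j ∣ 2 * k + 1) + 1) :=
        sum_le_sum fun j _ => count_dvd_four_mul_add_three_le_add_one hodd.pow N
    _ = ∑ j ∈ Ico 1 (Nat.log p (4 * N) + 1), N.count (fun k => p ^ j ∣ 2 * k + 1) +
          Nat.log p (4 * N) := by simp [sum_add_distrib]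

lemma prod_four_mul_add_three_dvd (N : ℕ) :
    ∏ k ∈ range N, (4 * k + 3) ∣ (∏ k ∈ range N, (2 * k + 1)) * primePowProd 4 3 (4 * N) := by
  have hA : ∏ k ∈ range N, (4 * k + 3) ≠ 0 := prod_ne_zero_iff.2 fun k _ => by omega
  have hB : ∏ k ∈ range N, (2 * k + 1) ≠ 0 := prod_ne_zero_iff.2 fun k _ => by omega
  have hM := primePowProd_ne_zero 4 3 (4 * N)
  rw [← Nat.factorization_prime_le_iff_dvd hA (mul_ne_zero hB hM)]
  intro p hp
  rw [Nat.factorization_mul hB hM, Finsupp.add_apply]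
  rcases hp.eq_two_or_odd with rfl | hodd
  · simp [factorization_two_prod_four_mul_add_three]
  rcases Nat.odd_mod_four_iff.1 hodd with hp1 | hp3
  · exact (factorization_prod_le_of_mod_four_eq_one hp hp1 N).trans (Nat.le_add_right _ _)
  · exact (factorization_prod_le_add_log hp (Nat.odd_iff.2 hodd) N).trans
      (Nat.add_le_add_left (log_le_factorization_primePowProd ⟨hp, hp3⟩ _) _)

lemma two_pow_le_primePowProd (N : ℕ) : 2 ^ N ≤ primePowProd 4 3 (4 * N) := by
  have hB : 0 < ∏ k ∈ range N, (2 * k + 1) := prod_pos fun k _ => by omega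
  have hM := Nat.pos_of_ne_zero (primePowProd_ne_zero 4 3 (4 * N))
  refine Nat.le_of_mul_le_mul_left ?_ hB
  calc (∏ k ∈ range N, (2 * k + 1)) * 2 ^ N = ∏ k ∈ range N, (2 * k + 1) * 2 := by
        rw [prod_mul_distrib, prod_const, card_range]
    _ ≤ ∏ k ∈ range N, (4 * k + 3) := prod_le_prod' fun k _ => by omega
    _ ≤ (∏ k ∈ range N, (2 * k + 1)) * primePowProd 4 3 (4 * N) :=
        Nat.le_of_dvd (Nat.mul_pos hB hM) (prod_four_mul_add_three_dvd N)

lemma le_log_add_three_mul_count {N : ℕ} (hN : N ≠ 0) :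
    N ≤ (Nat.log 2 N + 3) * (4 * N + 1).count (PrimeInClass 4 3) := by
  have hlog : 4 * N ≤ 2 ^ (Nat.log 2 N + 3) := by
    have := Nat.lt_pow_succ_log_self one_lt_two N
    rw [show Nat.log 2 N + 3 = Nat.log 2 N + 1 + 2 from rfl, pow_add]
    omega
  rw [← Nat.pow_le_pow_iff_right one_lt_two, pow_mul]
  calc 2 ^ N ≤ primePowProd 4 3 (4 * N) := two_pow_le_primePowProd N
    _ ≤ (4 * N) ^ (4 * N + 1).count (PrimeInClass 4 3) :=
        primePowProd_le_pow_count 4 3 (by omega)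
    _ ≤ _ := Nat.pow_le_pow_left hlog _

lemma three_mul_add_three_sq_le_two_pow {m : ℕ} (hm : 9 ≤ m) : 3 * (m + 3) ^ 2 ≤ 2 ^ m := by
  induction m, hm using Nat.le_induction with
  | base => norm_num
  | succ k hk ih => rw [pow_succ 2 k]; nlinarith

lemma three_mul_le_count_sq {N : ℕ} (hN : 512 ≤ N) :
    3 * N ≤ (4 * N + 1).count (PrimeInClass 4 3) ^ 2 := by
  set c := (4 * N + 1).count (PrimeInClass 4 3)
  set m := Nat.log 2 N
  have hm : 9 ≤ m := Nat.le_log_of_pow_le one_lt_two hN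
  have hmN : 3 * (m + 3) ^ 2 ≤ N :=
    (three_mul_add_three_sq_le_two_pow hm).trans (Nat.pow_log_le_self 2 (by omega))
  have hNc : N ≤ (m + 3) * c := le_log_add_three_mul_count (by omega)
  refine Nat.le_of_mul_le_mul_left ?_ (by omega : 0 < N)
  calc N * (3 * N) = 3 * N ^ 2 := by ring
    _ ≤ 3 * ((m + 3) * c) ^ 2 := by gcongr
    _ = 3 * (m + 3) ^ 2 * c ^ 2 := by ring
    _ ≤ N * c ^ 2 := by gcongr

end Chebyshev

section Enumeration

lemma sum_range_count_nth {M : Type*} [AddCommMonoid M] (p : ℕ → Prop) [DecidablePred p]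
    (f : ℕ → M) (n : ℕ) :
    ∑ i ∈ range (n.count p), f (Nat.nth p i) = ∑ x ∈ range n with p x, f x := by
  induction n with
  | zero => simp
  | succ n ih =>
    by_cases hn : p n
    · rw [Nat.count_succ_eq_succ_count hn, sum_range_succ, ih, Nat.nth_count hn, sum_filter,
        sum_filter, sum_range_succ, if_pos hn]
    · rw [Nat.count_succ_eq_count hn, ih, sum_filter, sum_filter, sum_range_succ, if_neg hn,
        add_zero]

lemma mul_add_le_of_strictMono_of_mod_eq {f : ℕ → ℕ} {m a : ℕ} (hf : StrictMono f)
    (hmod : ∀ n, f n % m = a) (n : ℕ) : m * n + a ≤ f n := by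
  have hdiv : StrictMono fun n => f n / m := fun i j hij => by
    refine (Nat.div_le_div_right (hf hij).le).lt_of_ne fun h => (hf hij).ne ?_
    rw [← Nat.div_add_mod (f i) m, ← Nat.div_add_mod (f j) m, hmod, hmod, h]
  calc m * n + a ≤ m * (f n / m) + a := by gcongr; exact hdiv.le_apply
    _ = f n := by rw [← hmod n, Nat.div_add_mod]

lemma add_le_sum_range_of_le_two_mul {f : ℕ → ℕ} {c m n : ℕ} (hmn : m < n)
    (hm : f m + c ≤ ∑ i ∈ range m, f i) (hle : f n ≤ 2 * f m) :
    f n + c ≤ ∑ i ∈ range n, f i :=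
  calc f n + c ≤ (f m + c) + f m := by omega
    _ ≤ ∑ i ∈ range m, f i + f m := by gcongr
    _ = ∑ i ∈ range (m + 1), f i := (sum_range_succ f m).symm
    _ ≤ ∑ i ∈ range n, f i := sum_le_sum_of_subset (range_subset_range.2 hmn)

end Enumeration

lemma infinite_primeInClass {q a : ℕ} (ha : a < q) (hcop : a.Coprime q) :
    (Set.ofPred (PrimeInClass q a)).Infinite :=
  (Nat.infinite_setOfPred_prime_and_modEq (by omega) hcop).mono fun _ hp =>
    ⟨hp.1, Nat.mod_eq_of_modEq hp.2 ha⟩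

lemma infinite_primeInClass_four_three : (Set.ofPred (PrimeInClass 4 3)).Infinite :=
  infinite_primeInClass (by norm_num) (by norm_num)

lemma q43_mem (n : ℕ) : PrimeInClass 4 3 (q43 n) :=
  Nat.nth_mem_of_infinite infinite_primeInClass_four_three n

lemma q43_strictMono : StrictMono q43 := Nat.nth_strictMono infinite_primeInClass_four_three

lemma q43_count {p : ℕ} (hp : PrimeInClass 4 3 p) : q43 (p.count (PrimeInClass 4 3)) = p :=
  Nat.nth_count hp

lemma count_q43 (n : ℕ) : (q43 n).count (PrimeInClass 4 3) = n :=
  Nat.count_nth_of_infinite infinite_primeInClass_four_three n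

lemma count_primeInClass_fifty_nine : Nat.count (PrimeInClass 4 3) 59 = 8 := by
  norm_num [Nat.count_succ, PrimeInClass]

lemma q43_eight : q43 8 = 59 := by
  rw [← count_primeInClass_fifty_nine, q43_count ⟨by norm_num, rfl⟩]

lemma S43_eight : S43 8 = 184 := by
  have hsum : S43 8 = ∑ p ∈ range 59 with PrimeInClass 4 3 p, p := by
    rw [← count_primeInClass_fifty_nine]
    exact sum_range_count_nth (PrimeInClass 4 3) id 59
  rw [hsum, sum_filter]
  norm_num [sum_range_succ, PrimeInClass]

lemma two_mul_sq_le_S43 (n : ℕ) : 2 * n ^ 2 ≤ S43 n := by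
  induction n with
  | zero => simp
  | succ n ih =>
    have hq : 4 * n + 3 ≤ q43 n :=
      mul_add_le_of_strictMono_of_mod_eq q43_strictMono (fun i => (q43_mem i).2) n
    calc 2 * (n + 1) ^ 2 ≤ 2 * n ^ 2 + (4 * n + 3) := by ring_nf; omega
      _ ≤ S43 n + q43 n := by gcongr
      _ = S43 (n + 1) := (sum_range_succ q43 n).symm

lemma q43_add_le_S43_of_large {n : ℕ} (hn : 2051 ≤ q43 n) : q43 n + 112 ≤ S43 n := by
  obtain ⟨N, hN⟩ : ∃ N, q43 n = 4 * N + 3 := ⟨q43 n / 4, by have := (q43_mem n).2; omega⟩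
  have hcount : (4 * N + 1).count (PrimeInClass 4 3) ≤ n :=
    (Nat.count_monotone _ (by omega)).trans_eq (count_q43 n)
  have hsq : 3 * N ≤ n ^ 2 :=
    (three_mul_le_count_sq (by omega)).trans (Nat.pow_le_pow_left hcount 2)
  have hS := two_mul_sq_le_S43 n
  omega

lemma q43_add_le_S43_of_le_two_mul {c m p x : ℕ} (hp : PrimeInClass 4 3 p) (hmp : q43 m ≤ p)
    (hpx : p ≤ x) (hbound : ∀ n ≥ m, q43 n ≤ x → q43 n + c ≤ S43 n) :
    ∀ n ≥ m, q43 n ≤ 2 * p → q43 n + c ≤ S43 n := by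
  intro n hmn hn
  rcases le_or_gt (q43 n) p with hnp | hpn
  · exact hbound n hmn (hnp.trans hpx)
  · obtain ⟨i, rfl⟩ : ∃ i, q43 i = p := ⟨_, q43_count hp⟩
    have hmi : m ≤ i := q43_strictMono.le_iff_le.1 hmp
    exact add_le_sum_range_of_le_two_mul (q43_strictMono.lt_iff_lt.1 hpn) (hbound i hmi hpx) hn

lemma q43_add_le_S43_of_le_fifty_nine :
    ∀ n ≥ 8, q43 n ≤ 59 → q43 n + 112 ≤ S43 n := by
  intro n hn hq
  obtain rfl : n = 8 := (q43_strictMono.le_iff_le.1 (hq.trans_eq q43_eight.symm)).antisymm hn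
  rw [q43_eight, S43_eight]
  norm_num

lemma q43_add_le_S43_of_small : ∀ n ≥ 8, q43 n ≤ 3254 → q43 n + 112 ≤ S43 n := by
  have double {p x : ℕ} (hp : p.Prime) (hmod : p % 4 = 3) (h59 : 59 ≤ p) :=
    q43_add_le_S43_of_le_two_mul (c := 112) (x := x) ⟨hp, hmod⟩ (q43_eight.trans_le h59)
  have h118 := double (p := 59) (by norm_num) rfl (by norm_num) le_rfl
    q43_add_le_S43_of_le_fifty_nine
  have h214 := double (p := 107) (by norm_num) rfl (by norm_num) (by norm_num) h118
  have h422 := double (p := 211) (by norm_num) rfl (by norm_num) (by norm_num) h214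
  have h838 := double (p := 419) (by norm_num) rfl (by norm_num) (by norm_num) h422
  have h1654 := double (p := 827) (by norm_num) rfl (by norm_num) (by norm_num) h838
  exact double (p := 1627) (by norm_num) rfl (by norm_num) (by norm_num) h1654

/-- **Lemma 2 (b).**  If `n ≥ 8`, then `S_{4,3}(n) - q_{4,3}(n+1) ≥ 112`
(in `0`-indexed form `q_{4,3}(n+1) = q43 n`). -/
theorem stmt5 : ∀ n : ℕ, 8 ≤ n → (112 : ℤ) ≤ (S43 n : ℤ) - (q43 n : ℤ) := by
  intro n hn
  have hbound : q43 n + 112 ≤ S43 n := by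
    rcases le_total (q43 n) 3254 with hsmall | hlarge
    · exact q43_add_le_S43_of_small n hn hsmall
    · exact q43_add_le_S43_of_large (by omega)
  omega
end

section
/- For every integer m ≥ 122, there exist k ≥ 1 and distinct prime numbers p₁, …, p_k, each congruent to 1 modulo 4, such that m = p₁ + ⋯ + p_k. -/
/-!
If every integer in `[122, b]` is a sum of distinct elements of `A` and `q ∉ A` satisfies
`q ≤ b - 121`, then adjoining `q` to `A` extends the interval to `[122, b + q]`. Hence, if the
subset sums of the primes `≡ 1 (mod 4)` below `x` fill `[122, 3 * x + 121]`, and `[x, 3 * x)`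
contains six more such primes, then the same holds with `3 * x` in place of `x`; the induction
starts at `x = 20000`.

Those six primes come from an argument in the style of Erdős, applied to `P = ∏ k < n, (4 * k + 1)`
with `n = 3 * a` and `x = 4 * a`. Apart from the powers of `2`, the prime factorization of `P`
differs from that of `n!` by at most one factor `p ^ Nat.log p (4 * n) ≤ 4 * n` for each prime
`p ∣ P`. A prime `p > x` dividing some `4 * k + 1 < 3 * x` has an odd cofactor less than `3`, so
that `p = 4 * k + 1`. Removing the powers of `2` from `n!` saves a factor of nearly `2 ^ n`, whence
`P` exceeds the odd part of `n!` by a factor of about `8 ^ n = 2 ^ (9 * a)`, whereas the primes up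
to `x` contribute only about `4 ^ x = 2 ^ (8 * a)`. The remaining `2 ^ a` has to come from primes
`≡ 1 (mod 4)` in `(x, 3 * x)`.
-/

open Finset

section SubsetSum

theorem add_mem_subsetSum_union {M : Type*} [DecidableEq M] [AddCommMonoid M] {A B : Finset M}
    {x y : M} (hAB : Disjoint A B) (hx : x ∈ A.subsetSum) (hy : y ∈ B.subsetSum) :
    x + y ∈ (A ∪ B).subsetSum := by
  obtain ⟨S, hSA, rfl⟩ := mem_subsetSum_iff.mp hx
  obtain ⟨T, hTB, rfl⟩ := mem_subsetSum_iff.mp hy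
  exact mem_subsetSum_iff.mpr
    ⟨S ∪ T, union_subset_union hSA hTB, sum_union (hAB.mono hSA hTB)⟩

variable {A : Finset ℕ} {a b : ℕ}

theorem Icc_subset_subsetSum_insert {q : ℕ} (h : Icc a b ⊆ A.subsetSum) (hqA : q ∉ A)
    (hqb : q + a ≤ b + 1) : Icc a (b + q) ⊆ (insert q A).subsetSum := by
  intro m hm
  rw [mem_Icc] at hm
  by_cases hmb : m ≤ b
  · exact subsetSum_mono (subset_insert q A) (h (mem_Icc.mpr ⟨hm.1, hmb⟩))
  · have hmq : m - q ∈ A.subsetSum := h (mem_Icc.mpr (by lia))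
    have hq : q ∈ ({q} : Finset ℕ).subsetSum := subset_subsetSum (mem_singleton_self q)
    have := add_mem_subsetSum_union (disjoint_singleton_left.mpr hqA) hq hmq
    rwa [Nat.add_sub_cancel' (by lia), singleton_union] at this

theorem Icc_subset_subsetSum_union (h : Icc a b ⊆ A.subsetSum) {B : Finset ℕ}
    (hAB : Disjoint A B) (hB : ∀ q ∈ B, q + a ≤ b + 1) :
    Icc a (b + ∑ q ∈ B, q) ⊆ (A ∪ B).subsetSum := by
  induction B using Finset.induction_on with
  | empty => simpa using h
  | insert q B hqB ih =>
    rw [disjoint_insert_right] at hAB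
    rw [forall_mem_insert] at hB
    have := Icc_subset_subsetSum_insert (ih hAB.2 hB.2) (q := q) (by simp [hAB.1, hqB]) (by lia)
    rwa [sum_insert hqB, union_insert, add_comm q, ← add_assoc]

end SubsetSum

/-- The members of `𝒫(4,1)` in the half-open interval `[a, b)`. -/
def primesOneModFour (a b : ℕ) : Finset ℕ := {p ∈ Ico a b | p.Prime ∧ p % 4 = 1}

theorem mem_primesOneModFour {a b p : ℕ} :
    p ∈ primesOneModFour a b ↔ (a ≤ p ∧ p < b) ∧ p.Prime ∧ p % 4 = 1 := by
  simp [primesOneModFour]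

theorem primesOneModFour_mono_right {a b c : ℕ} (hbc : b ≤ c) :
    primesOneModFour a b ⊆ primesOneModFour a c :=
  filter_subset_filter _ (Ico_subset_Ico_right hbc)

theorem disjoint_primesOneModFour (a b c : ℕ) :
    Disjoint (primesOneModFour a b) (primesOneModFour b c) :=
  disjoint_filter_filter (Ico_disjoint_Ico_consecutive a b c)

theorem primesOneModFour_union {a b c : ℕ} (hab : a ≤ b) (hbc : b ≤ c) :
    primesOneModFour a b ∪ primesOneModFour b c = primesOneModFour a c := by
  rw [primesOneModFour, primesOneModFour, ← filter_union, Ico_union_Ico_eq_Ico hab hbc,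
    primesOneModFour]

theorem Icc_subset_subsetSum_primesOneModFour_succ {a b x q : ℕ}
    (h : Icc a b ⊆ (primesOneModFour 0 x).subsetSum) (hq : q ∈ primesOneModFour x (b + 2 - a)) :
    Icc a (b + q) ⊆ (primesOneModFour 0 (q + 1)).subsetSum := by
  obtain ⟨hqx, hq⟩ := mem_primesOneModFour.mp hq
  have hqnot : q ∉ primesOneModFour 0 x := fun hmem => by
    rw [mem_primesOneModFour] at hmem
    lia
  refine (Icc_subset_subsetSum_insert h hqnot (by lia)).trans
    (subsetSum_mono (insert_subset ?_ ?_))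
  · exact mem_primesOneModFour.mpr ⟨by lia, hq⟩
  · exact primesOneModFour_mono_right (by lia)

theorem Icc_subset_subsetSum_primesOneModFour {a b x y : ℕ}
    (h : Icc a b ⊆ (primesOneModFour 0 x).subsetSum) (hxy : x ≤ y) (hyb : y + a ≤ b + 2) :
    Icc a (b + #(primesOneModFour x y) * x) ⊆ (primesOneModFour 0 y).subsetSum := by
  have hsum : #(primesOneModFour x y) * x ≤ ∑ q ∈ primesOneModFour x y, q :=
    card_nsmul_le_sum _ _ x fun q hq => (mem_primesOneModFour.mp hq).1.1
  have hunion := Icc_subset_subsetSum_union h (disjoint_primesOneModFour 0 x y) fun q hq => by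
    rw [mem_primesOneModFour] at hq
    lia
  rw [primesOneModFour_union x.zero_le hxy] at hunion
  exact (Icc_subset_Icc_right (by lia)).trans hunion

section Factorization

variable {d c n p : ℕ}

theorem card_filter_dvd_mul_add_le {r : ℕ} (hr : 0 < r) (hrd : r.Coprime d) (c n : ℕ) :
    #{k ∈ range n | r ∣ d * k + c} ≤ n / r + 1 := by
  obtain hempty | ⟨k₀, hk₀⟩ := {k ∈ range n | r ∣ d * k + c}.eq_empty_or_nonempty
  · simp [hempty]
  have hdvd₀ : d * k₀ + c ≡ 0 [MOD r] := Nat.modEq_zero_iff_dvd.mpr (mem_filter.mp hk₀).2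
  have hsubset : {k ∈ range n | r ∣ d * k + c} ⊆ {k ∈ range n | k ≡ k₀ [MOD r]} := by
    refine monotone_filter_right _ fun k _ hk => ?_
    have hmod : d * k + c ≡ d * k₀ + c [MOD r] := (Nat.modEq_zero_iff_dvd.mpr hk).trans hdvd₀.symm
    exact Nat.ModEq.cancel_left_of_coprime hrd (hmod.add_right_cancel' c)
  calc #{k ∈ range n | r ∣ d * k + c}
      ≤ #{k ∈ range n | k ≡ k₀ [MOD r]} := card_le_card hsubset
    _ = n / r + if k₀ % r < n % r then 1 else 0 := by
      rw [← Nat.count_eq_card_filter_range, Nat.count_modEq_card n hr k₀]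
    _ ≤ n / r + 1 := by split_ifs <;> lia

theorem factorization_prod_mul_add_le {N : ℕ} (hp : p.Prime) (hpd : p.Coprime d) (hc : c ≠ 0)
    (hN : ∀ k < n, d * k + c ≤ N) :
    (∏ k ∈ range n, (d * k + c)).factorization p ≤ n.factorial.factorization p + p.log N := by
  have hnN : n ≤ N := by
    obtain rfl | hn := n.eq_zero_or_pos
    · exact N.zero_le
    have hd : d ≠ 0 := by
      rintro rfl
      exact hp.ne_one (Nat.coprime_zero_right p |>.mp hpd)
    have := Nat.le_mul_of_pos_left (n - 1) (Nat.pos_of_ne_zero hd)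
    have := hN (n - 1) (by lia)
    lia
  have hlt : N < p ^ (p.log N + 1) := Nat.lt_pow_succ_log_self hp.one_lt N
  calc (∏ k ∈ range n, (d * k + c)).factorization p
      = ∑ k ∈ range n, ∑ i ∈ Ico 1 (p.log N + 1), if p ^ i ∣ d * k + c then 1 else 0 := by
        rw [Nat.factorization_prod_apply fun k _ => by lia]
        refine sum_congr rfl fun k hk => ?_
        rw [Nat.factorization_eq_card_pow_dvd_of_lt hp (by lia)
          ((hN k (mem_range.mp hk)).trans_lt hlt), card_filter]
    _ = ∑ i ∈ Ico 1 (p.log N + 1), #{k ∈ range n | p ^ i ∣ d * k + c} := by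
        simp only [card_filter]
        exact sum_comm
    _ ≤ ∑ i ∈ Ico 1 (p.log N + 1), (n / p ^ i + 1) :=
        sum_le_sum fun i _ => card_filter_dvd_mul_add_le (pow_pos hp.pos i) (hpd.pow_left i) c n
    _ = n.factorial.factorization p + p.log N := by
        rw [sum_add_distrib, ← Nat.factorization_factorial hp
          (Nat.lt_succ_of_le (Nat.log_mono_right hnN))]
        simp

theorem pow_mul_factorial_le_mul_prod_mul_add (hn : n ≠ 0) (hc : c ≠ 0) (d : ℕ) :
    d ^ n * n.factorial ≤ d * n * ∏ k ∈ range n, (d * k + c) := by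
  induction n, Nat.one_le_iff_ne_zero.mpr hn using Nat.le_induction with
  | base => simpa using Nat.le_mul_of_pos_right d (Nat.pos_of_ne_zero hc)
  | succ n hn ih =>
    calc d ^ (n + 1) * (n + 1).factorial = d * (n + 1) * (d ^ n * n.factorial) := by
          rw [Nat.factorial_succ]; ring
      _ ≤ d * (n + 1) * (d * n * ∏ k ∈ range n, (d * k + c)) := by
          exact Nat.mul_le_mul_left _ (ih (by lia))
      _ = d * (n + 1) * ((∏ k ∈ range n, (d * k + c)) * (d * n)) := by ring
      _ ≤ d * (n + 1) * ∏ k ∈ range (n + 1), (d * k + c) := by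
          rw [prod_range_succ]; gcongr; exact Nat.le_add_right _ _

theorem le_sub_one_mul_factorization_factorial (hp : p.Prime) (n : ℕ) :
    n ≤ (p - 1) * (n.factorial.factorization p + p.log n + 1) := by
  obtain rfl | hn := eq_or_ne n 0
  · exact Nat.zero_le _
  have hlegendre := Nat.sub_one_mul_factorization_factorial (n := n) hp
  have hdigits : (p.digits n).sum ≤ (p.log n + 1) * (p - 1) := by
    have := List.sum_le_card_nsmul (p.digits n) (p - 1) fun x hx =>
      Nat.le_sub_one_of_lt (Nat.digits_lt_base hp.one_lt hx)
    rwa [Nat.length_digits p n hp.one_lt hn, smul_eq_mul] at this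
  calc n ≤ (p - 1) * n.factorial.factorization p + (p.log n + 1) * (p - 1) := by lia
    _ = (p - 1) * (n.factorial.factorization p + p.log n + 1) := by ring

theorem two_pow_le_two_pow_factorization_factorial_mul (hn : n ≠ 0) :
    2 ^ n ≤ 2 ^ n.factorial.factorization 2 * (2 * n) :=
  calc 2 ^ n ≤ 2 ^ (n.factorial.factorization 2 + Nat.log 2 n + 1) :=
        Nat.pow_le_pow_right two_pos
          (by simpa using le_sub_one_mul_factorization_factorial Nat.prime_two n)
    _ = 2 ^ n.factorial.factorization 2 * (2 * 2 ^ Nat.log 2 n) := by ring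
    _ ≤ 2 ^ n.factorial.factorization 2 * (2 * n) := by gcongr; exact Nat.pow_log_le_self 2 hn

end Factorization

section PrimesBetween

variable {n p x : ℕ}

theorem mem_primesOneModFour_of_dvd_prod (hp : p.Prime) (hxp : x < p) (hnx : 4 * n ≤ 3 * x)
    (hdvd : p ∣ ∏ k ∈ range n, (4 * k + 1)) : p ∈ primesOneModFour x (4 * n) := by
  obtain ⟨k, hk, j, hj⟩ := (hp.prime.dvd_finsetProd_iff _).mp hdvd
  rw [mem_range] at hk
  have hj3 : j < 3 := by
    by_contra! hj3
    have := Nat.mul_le_mul_left p hj3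
    lia
  obtain rfl : j = 1 := by interval_cases j <;> lia
  exact mem_primesOneModFour.mpr ⟨by lia, hp, by lia⟩

theorem factorization_prod_four_mul_add_one_le (hp : p.Prime) (n : ℕ) :
    (∏ k ∈ range n, (4 * k + 1)).factorization p ≤
      (ordCompl[2] (n.factorial)).factorization p + p.log (4 * n) := by
  obtain rfl | hp2 := eq_or_ne p 2
  · have hodd : ¬2 ∣ ∏ k ∈ range n, (4 * k + 1) := fun hdvd => by
      obtain ⟨k, -, hk⟩ := (hp.prime.dvd_finsetProd_iff _).mp hdvd
      lia
    rw [Nat.factorization_eq_zero_of_not_dvd hodd]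
    exact Nat.zero_le _
  · rw [Nat.factorization_ordCompl, Finsupp.erase_ne hp2]
    have hp4 : p.Coprime 4 := ((Nat.coprime_primes hp Nat.prime_two).mpr hp2).pow_right 2
    exact factorization_prod_mul_add_le hp hp4 one_ne_zero fun k hk => by lia

/-- An upper bound, when `4 * n ≤ 3 * x`, for the quotient of `∏ k < n, (4 * k + 1)` by the odd part
of `n!`. The first product runs over all `q ≤ √(4 * n)`, not only over primes, since the crude
bound `(4 * n) ^ √(4 * n)` for it suffices. -/
def excessBound (n x : ℕ) : ℕ :=
  (∏ q ∈ Icc 1 (4 * n).sqrt, q ^ q.log (4 * n)) * primorial x * ∏ q ∈ primesOneModFour x (4 * n), q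

theorem pow_log_dvd_excessBound (hp : p.Prime) (hnx : 4 * n ≤ 3 * x)
    (hdvd : p ∣ ∏ k ∈ range n, (4 * k + 1)) : p ^ p.log (4 * n) ∣ excessBound n x := by
  rw [excessBound]
  obtain hps | hps := le_or_gt p (4 * n).sqrt
  · have hmem : p ∈ Icc 1 (4 * n).sqrt := mem_Icc.mpr ⟨hp.one_le, hps⟩
    exact ((dvd_prod_of_mem (fun q => q ^ q.log (4 * n)) hmem).mul_right _).mul_right _
  have hlog : p.log (4 * n) ≤ 1 :=
    Nat.le_of_lt_succ (Nat.log_lt_of_lt_pow' two_ne_zero (Nat.sqrt_lt'.mp hps))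
  refine (pow_dvd_pow p hlog).trans ?_
  rw [pow_one]
  obtain hpx | hpx := le_or_gt p x
  · exact ((hp.dvd_primorial_iff.mpr hpx).mul_left _).mul_right _
  · have hmem := mem_primesOneModFour_of_dvd_prod hp hpx hnx hdvd
    exact (dvd_prod_of_mem (fun q => q) hmem).mul_left _

theorem prod_four_mul_add_one_dvd_ordCompl_mul_excessBound (hnx : 4 * n ≤ 3 * x) :
    ∏ k ∈ range n, (4 * k + 1) ∣ ordCompl[2] (n.factorial) * excessBound n x := by
  rw [Nat.dvd_iff_prime_pow_dvd_dvd]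
  intro p i hp hi
  obtain rfl | hi0 := eq_or_ne i 0
  · exact one_dvd _
  have hprod : ∏ k ∈ range n, (4 * k + 1) ≠ 0 := prod_ne_zero_iff.mpr fun k _ => by lia
  have hile := ((hp.pow_dvd_iff_le_factorization hprod).mp hi).trans
    (factorization_prod_four_mul_add_one_le hp n)
  refine (pow_dvd_pow p hile).trans ?_
  rw [pow_add]
  exact mul_dvd_mul (Nat.ordProj_dvd _ p)
    (pow_log_dvd_excessBound hp hnx ((dvd_pow_self p hi0).trans hi))

theorem excessBound_pos (n x : ℕ) : 0 < excessBound n x := by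
  refine mul_pos (mul_pos (prod_pos fun q hq => ?_) (primorial_pos x)) (prod_pos fun q hq => ?_)
  · exact pow_pos (mem_Icc.mp hq).1 _
  · exact (mem_primesOneModFour.mp hq).2.1.pos

theorem excessBound_le (hn : n ≠ 0) (x : ℕ) :
    excessBound n x ≤
      (4 * n) ^ (4 * n).sqrt * 4 ^ x * (4 * n) ^ #(primesOneModFour x (4 * n)) := by
  have hsmall : ∏ q ∈ Icc 1 (4 * n).sqrt, q ^ q.log (4 * n) ≤ (4 * n) ^ (4 * n).sqrt := by
    simpa using prod_le_pow_card (Icc 1 (4 * n).sqrt) (fun q => q ^ q.log (4 * n)) (4 * n)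
      fun q _ => Nat.pow_log_le_self q (by lia)
  have hlarge : ∏ q ∈ primesOneModFour x (4 * n), q ≤ (4 * n) ^ #(primesOneModFour x (4 * n)) :=
    prod_le_pow_card _ _ _ fun q hq => (mem_primesOneModFour.mp hq).1.2.le
  exact Nat.mul_le_mul (Nat.mul_le_mul hsmall (primorial_le_four_pow x)) hlarge

theorem eight_pow_le_mul_excessBound (hn : n ≠ 0) (hnx : 4 * n ≤ 3 * x) :
    8 ^ n ≤ 8 * n ^ 2 * excessBound n x := by
  have hprod : ∏ k ∈ range n, (4 * k + 1) ≤ ordCompl[2] (n.factorial) * excessBound n x :=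
    Nat.le_of_dvd (mul_pos (Nat.ordCompl_pos 2 n.factorial_ne_zero) (excessBound_pos n x))
      (prod_four_mul_add_one_dvd_ordCompl_mul_excessBound hnx)
  have hcancel : 4 ^ n * 2 ^ n.factorial.factorization 2 ≤ 4 * n * excessBound n x := by
    refine Nat.le_of_mul_le_mul_left ?_ n.factorial_pos
    calc n.factorial * (4 ^ n * 2 ^ n.factorial.factorization 2)
        = 4 ^ n * n.factorial * 2 ^ n.factorial.factorization 2 := by ring
      _ ≤ 4 * n * (ordCompl[2] (n.factorial) * excessBound n x) *
            2 ^ n.factorial.factorization 2 :=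
          Nat.mul_le_mul_right _ ((pow_mul_factorial_le_mul_prod_mul_add hn one_ne_zero 4).trans
            (Nat.mul_le_mul_left _ hprod))
      _ = ordProj[2] (n.factorial) * ordCompl[2] (n.factorial) *
            (4 * n * excessBound n x) := by ring
      _ = n.factorial * (4 * n * excessBound n x) := by
          rw [Nat.ordProj_mul_ordCompl_eq_self]
  calc 8 ^ n = 4 ^ n * 2 ^ n := by rw [← mul_pow]; norm_num
    _ ≤ 4 ^ n * (2 ^ n.factorial.factorization 2 * (2 * n)) :=
        Nat.mul_le_mul_left _ (two_pow_le_two_pow_factorization_factorial_mul hn)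
    _ = 4 ^ n * 2 ^ n.factorial.factorization 2 * (2 * n) := (mul_assoc _ _ _).symm
    _ ≤ 4 * n * excessBound n x * (2 * n) := Nat.mul_le_mul_right _ hcancel
    _ = 8 * n ^ 2 * excessBound n x := by ring

theorem two_pow_le_pow_sqrt_add_card {a : ℕ} (ha : a ≠ 0) :
    2 ^ a ≤ (12 * a) ^ ((12 * a).sqrt + 2 + #(primesOneModFour (4 * a) (12 * a))) := by
  have hexcess := excessBound_le (n := 3 * a) (by lia) (4 * a)
  rw [show 4 * (3 * a) = 12 * a by ring] at hexcess
  refine Nat.le_of_mul_le_mul_left ?_ (pow_pos (four_pos : 0 < 4) (4 * a))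
  calc 4 ^ (4 * a) * 2 ^ a = 8 ^ (3 * a) := by
        rw [show 4 = 2 ^ 2 by rfl, show 8 = 2 ^ 3 by rfl, ← pow_mul, ← pow_mul, ← pow_add]
        ring_nf
    _ ≤ 8 * (3 * a) ^ 2 * excessBound (3 * a) (4 * a) :=
        eight_pow_le_mul_excessBound (by lia) (by lia)
    _ ≤ (12 * a) ^ 2 * ((12 * a) ^ (12 * a).sqrt * 4 ^ (4 * a) *
          (12 * a) ^ #(primesOneModFour (4 * a) (12 * a))) :=
        Nat.mul_le_mul (by nlinarith) hexcess
    _ = 4 ^ (4 * a) * (12 * a) ^ ((12 * a).sqrt + 2 +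
          #(primesOneModFour (4 * a) (12 * a))) := by ring

end PrimesBetween

theorem pow_sqrt_add_seven_lt_two_pow {a : ℕ} (ha : 5000 ≤ a) :
    (12 * a) ^ ((12 * a).sqrt + 7) < 2 ^ a := by
  set s := (12 * a).sqrt
  have hs224 : 224 ≤ s := Nat.le_sqrt.mpr (by lia)
  have hsq : s * s ≤ 12 * a := Nat.sqrt_le _
  have hlinear : ∀ t ≥ 8, 28 * (t + 1) ≤ 2 ^ t := fun t ht => by
    induction t, ht using Nat.le_induction with
    | base => norm_num
    | succ t _ ih => rw [pow_succ]; lia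
  have hsucc : s + 1 ≤ 2 ^ (s / 28) := (by lia : s + 1 ≤ _).trans (hlinear (s / 28) (by lia))
  calc (12 * a) ^ (s + 7) < ((s + 1) ^ 2) ^ (s + 7) := by
        gcongr
        exact Nat.lt_succ_sqrt' (12 * a)
    _ ≤ ((2 ^ (s / 28)) ^ 2) ^ (s + 7) := by gcongr
    _ = 2 ^ (2 * (s / 28) * (s + 7)) := by rw [← pow_mul, ← pow_mul]; ring_nf
    _ ≤ 2 ^ a := by
        have : 28 * (s / 28) ≤ s := Nat.mul_div_le s 28
        exact Nat.pow_le_pow_right two_pos (by nlinarith)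

theorem six_le_card_primesOneModFour {a : ℕ} (ha : 5000 ≤ a) :
    6 ≤ #(primesOneModFour (4 * a) (12 * a)) := by
  have hlt := (pow_sqrt_add_seven_lt_two_pow ha).trans_le (two_pow_le_pow_sqrt_add_card (by lia))
  have := (Nat.pow_lt_pow_iff_right (by lia)).mp hlt
  lia

theorem Icc_subset_subsetSum_primesOneModFour_110 :
    Icc 122 234 ⊆ (primesOneModFour 0 110).subsetSum := by
  -- Halving the set of primes keeps the enumerated power sets small enough for the kernel.
  have hsplit : ∀ m ∈ Icc 122 234, ∃ u ∈ (primesOneModFour 50 110).subsetSum,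
      ∃ v ∈ (primesOneModFour 0 50).subsetSum, v + u = m := by decide +kernel
  intro m hm
  obtain ⟨u, hu, v, hv, rfl⟩ := hsplit m hm
  rw [← primesOneModFour_union (a := 0) (b := 50) (c := 110) (by simp) (by simp)]
  exact add_mem_subsetSum_union (disjoint_primesOneModFour 0 50 110) hv hu

theorem Icc_subset_subsetSum_primesOneModFour_20000 :
    Icc 122 (3 * 20000 + 121) ⊆ (primesOneModFour 0 20000).subsetSum := by
  -- Up to `13313`, each prime is the largest one admitted by the interval reached so far.
  have h := Icc_subset_subsetSum_primesOneModFour_110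
  replace h := Icc_subset_subsetSum_primesOneModFour_succ h (q := 113)
    (by norm_num [mem_primesOneModFour])
  replace h := Icc_subset_subsetSum_primesOneModFour_succ h (q := 197)
    (by norm_num [mem_primesOneModFour])
  replace h := Icc_subset_subsetSum_primesOneModFour_succ h (q := 421)
    (by norm_num [mem_primesOneModFour])
  replace h := Icc_subset_subsetSum_primesOneModFour_succ h (q := 829)
    (by norm_num [mem_primesOneModFour])
  replace h := Icc_subset_subsetSum_primesOneModFour_succ h (q := 1669)
    (by norm_num [mem_primesOneModFour])
  replace h := Icc_subset_subsetSum_primesOneModFour_succ h (q := 3329)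
    (by norm_num [mem_primesOneModFour])
  replace h := Icc_subset_subsetSum_primesOneModFour_succ h (q := 6661)
    (by norm_num [mem_primesOneModFour])
  replace h := Icc_subset_subsetSum_primesOneModFour_succ h (q := 13313)
    (by norm_num [mem_primesOneModFour])
  replace h := Icc_subset_subsetSum_primesOneModFour_succ h (q := 19993)
    (by norm_num [mem_primesOneModFour])
  replace h := Icc_subset_subsetSum_primesOneModFour_succ h (q := 19997)
    (by norm_num [mem_primesOneModFour])
  exact (Icc_subset_Icc_right (by norm_num)).trans
    (h.trans (subsetSum_mono (primesOneModFour_mono_right (by norm_num))))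

theorem Icc_subset_subsetSum_primesOneModFour_three_pow (k : ℕ) :
    Icc 122 (3 * (20000 * 3 ^ k) + 121) ⊆ (primesOneModFour 0 (20000 * 3 ^ k)).subsetSum := by
  induction k with
  | zero => exact Icc_subset_subsetSum_primesOneModFour_20000
  | succ k ih =>
    have hcard : 6 ≤ #(primesOneModFour (20000 * 3 ^ k) (20000 * 3 ^ (k + 1))) := by
      convert six_le_card_primesOneModFour (a := 5000 * 3 ^ k)
        (Nat.le_mul_of_pos_right 5000 (by positivity)) using 3 <;> ring
    have hextend := Icc_subset_subsetSum_primesOneModFour ih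
      (y := 20000 * 3 ^ (k + 1)) (by lia) (by lia)
    refine (Icc_subset_Icc_right ?_).trans hextend
    calc 3 * (20000 * 3 ^ (k + 1)) + 121
        = 3 * (20000 * 3 ^ k) + 121 + 6 * (20000 * 3 ^ k) := by ring
      _ ≤ 3 * (20000 * 3 ^ k) + 121 +
          #(primesOneModFour (20000 * 3 ^ k) (20000 * 3 ^ (k + 1))) * (20000 * 3 ^ k) := by gcongr

/-- **Theorem 1 (a).**
For every integer `m ≥ 122`, there exist finitely many (at least one) distinct primes,
each congruent to `1` modulo `4`, whose sum is `m`. -/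
theorem stmt6 (m : ℕ) (hm : 122 ≤ m) :
    ∃ T : Finset ℕ, T.Nonempty ∧ (∀ p ∈ T, p.Prime ∧ p % 4 = 1) ∧ ∑ p ∈ T, p = m := by
  have hlt : m < 3 ^ m := Nat.lt_pow_self (by norm_num)
  have hmem : m ∈ (primesOneModFour 0 (20000 * 3 ^ m)).subsetSum :=
    Icc_subset_subsetSum_primesOneModFour_three_pow m (mem_Icc.mpr ⟨hm, by lia⟩)
  obtain ⟨T, hT, hsum⟩ := mem_subsetSum_iff.mp hmem
  refine ⟨T, nonempty_of_sum_ne_zero (f := id) ?_, fun p hp => ?_, hsum⟩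
  · exact ne_of_eq_of_ne hsum (by lia)
  · exact (mem_primesOneModFour.mp (hT hp)).2
end
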